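/- arXiv:1802.02837 — 2 statements merged into one kernel-verified Lean document; each statement's English description precedes it below -/
import Mathlib

section
/- Let k ≥ 1 and let G be a compact (closed) subgroup of the orthogonal group O(k). For each n ≥ 1, let c(n) denote the cohomogeneity of the action of G × SO(n) on Matrix (Fin k) (Fin n) ℝ given by (g,h)·A = g A hᵀ. Then the sequence c(n) is eventually constant: there exist N and c₀ such that c(n) = c₀ for all n ≥ N. -/
open Matrix ENNReal

attribute [local instance] Matrix.normedAddCommGroup

/-- The orbit of `A` under the action `(g,h)·A = g A hᵀ` of `G × SO(n)` on `k × n`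
real matrices, for a subgroup `G` of `O(k)`. -/
def orbit11 {k n : ℕ} (G : Subgroup (Matrix.orthogonalGroup (Fin k) ℝ))
    (A : Matrix (Fin k) (Fin n) ℝ) : Set (Matrix (Fin k) (Fin n) ℝ) :=
  {B | ∃ g ∈ G, ∃ h ∈ Matrix.specialOrthogonalGroup (Fin n) ℝ,
    B = (g : Matrix (Fin k) (Fin k) ℝ) * A * (h : Matrix (Fin n) (Fin n) ℝ)ᵀ}

/-- The cohomogeneity of the action of `G × SO(n)` on `k × n` real matrices: the real
dimension `k·n` minus the supremum of the Hausdorff dimensions of the orbits. -/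
noncomputable def cohom11 (k : ℕ) (G : Subgroup (Matrix.orthogonalGroup (Fin k) ℝ))
    (n : ℕ) : ℝ≥0∞ :=
  (k * n : ℕ) - sSup {d : ℝ≥0∞ | ∃ A : Matrix (Fin k) (Fin n) ℝ, d = dimH (orbit11 G A)}

/-!
For `n > k` the fibres of the Gram map `A ↦ A Aᴴ` are exactly the `SO(n)`-orbits on `k × n`
matrices, so the orbit of `A` under `G × SO(n)` is the preimage of the `G`-conjugation orbit of
`A Aᴴ` in the space of symmetric `k × k` matrices. Where `A Aᴴ` is invertible the Gram map is a
submersion, hence locally a projection in bi-Lipschitz coordinates, and Hausdorff dimension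
behaves well under products with a vector space: the dimension of the orbit exceeds that of the
conjugation orbit by exactly `k * n - dim Sym(k)`. The matrices with singular `A Aᴴ` have rank
less than `k` and together have dimension at most `(k - 1) * (k + n)`, which is smaller than
`k * n - dim Sym(k)` for large `n`. Since the invertible Gram matrices are the positive definite
ones, whatever `n` is, the cohomogeneity stabilizes at `dim Sym(k)` minus the largest dimension of
the conjugation orbit of a positive definite matrix.
-/

section HausdorffDimension

open MeasureTheory Metric Set Filter Module
open scoped NNReal Topology

section Prod

variable {X Y : Type*} [EMetricSpace X] [EMetricSpace Y]

theorem ediam_prod_closedEBall_le {A : Set X} {δ : ℝ≥0∞} (hA : ediam A ≤ δ) (y : Y) :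
    ediam (A ×ˢ closedEBall y δ) ≤ 2 * δ := by
  refine ediam_le fun p hp q hq ↦ max_le ?_ ?_
  · exact (edist_le_ediam_of_mem hp.1 hq.1).trans (hA.trans (le_mul_of_one_le_left' one_le_two))
  · exact (edist_le_ediam_of_mem hp.2 hq.2).trans ediam_closedEBall_le

theorem pre_prod_le_coveringNumber {s d : ℝ} (hsd : 0 ≤ s + d) {r : ℝ≥0∞} {δ : ℝ≥0} (hδ : δ ≠ 0)
    (hδr : 2 * δ ≤ r) {A : Set X} (hA : ediam A ≤ δ) {K : Set Y} (hK : coveringNumber δ K ≠ ⊤) :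
    OuterMeasure.mkMetric'.pre (fun t ↦ ediam t ^ (s + d)) r (A ×ˢ K) ≤
      2 ^ (s + d) * (coveringNumber δ K * (δ : ℝ≥0∞) ^ d) * (δ : ℝ≥0∞) ^ s := by
  let c := minimalCover δ K
  have hc : c.Finite := finite_minimalCover
  have hcover : A ×ˢ K ⊆ ⋃ y ∈ c, A ×ˢ closedEBall y (δ : ℝ≥0∞) := by
    rintro ⟨x, y⟩ ⟨hx, hy⟩
    obtain ⟨z, hz, hyz⟩ := isCover_minimalCover hK hy
    exact mem_iUnion₂.2 ⟨z, hz, hx, hyz⟩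
  have hpiece (y : Y) : OuterMeasure.mkMetric'.pre (fun t ↦ ediam t ^ (s + d)) r
      (A ×ˢ closedEBall y (δ : ℝ≥0∞)) ≤ (2 * δ : ℝ≥0∞) ^ (s + d) :=
    have hdiam := ediam_prod_closedEBall_le hA y
    (OuterMeasure.mkMetric'.pre_le (hdiam.trans hδr)).trans (rpow_le_rpow hdiam hsd)
  calc _ ≤ ∑' _ : c, (2 * δ : ℝ≥0∞) ^ (s + d) :=
        (measure_mono hcover).trans
          ((measure_biUnion_le _ hc.countable _).trans (ENNReal.tsum_le_tsum fun y ↦ hpiece y))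
    _ = coveringNumber δ K * (2 * δ : ℝ≥0∞) ^ (s + d) := by
        rw [ENNReal.tsum_const, ENat.card_coe_set_eq, encard_minimalCover hK]
    _ = _ := by
        rw [mul_rpow_of_nonneg _ _ hsd, rpow_add _ _ (by simpa using hδ) coe_ne_top]
        ring

theorem pre_prod_le {s d : ℝ} (hsd : 0 ≤ s + d) {r : ℝ≥0∞} {A : Set X} (hAr : ediam A < r / 2)
    (hA : ediam A < 1) {K : Set Y} {C : ℝ≥0}
    (hK : ∀ δ : ℝ≥0, δ ≠ 0 → δ ≤ 1 → coveringNumber δ K * (δ : ℝ≥0∞) ^ d ≤ C) :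
    OuterMeasure.mkMetric'.pre (fun t ↦ ediam t ^ (s + d)) r (A ×ˢ K) ≤
      2 ^ (s + d) * C * ediam A ^ s := by
  -- `ediam A` may vanish, so cover at a scale `δ > ediam A` and let `δ` decrease to `ediam A`.
  have htend : Tendsto (fun δ : ℝ≥0∞ ↦ 2 ^ (s + d) * C * δ ^ s) (𝓝[>] ediam A)
      (𝓝 (2 ^ (s + d) * C * ediam A ^ s)) :=
    (ENNReal.Tendsto.const_mul (ENNReal.continuous_rpow_const.tendsto _)
      (.inr (by finiteness))).mono_left nhdsWithin_le_nhds
  have : (𝓝[>] ediam A).NeBot := nhdsGT_neBot_of_exists_gt ⟨1, hA⟩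
  refine ge_of_tendsto htend ?_
  filter_upwards [Ioo_mem_nhdsGT hAr, Ioo_mem_nhdsGT hA] with δ ⟨hAδ, hδr⟩ ⟨_, hδ_one⟩
  lift δ to ℝ≥0 using hδ_one.ne_top
  have hδ : δ ≠ 0 := by rintro rfl; simp at hAδ
  replace hδ_one : δ ≤ 1 := by exact_mod_cast hδ_one.le
  replace hδr : 2 * (δ : ℝ≥0∞) ≤ r := by
    rw [mul_comm, ← ENNReal.le_div_iff_mul_le (by simp) (by simp)]
    exact hδr.le
  have hK_top : coveringNumber δ K ≠ ⊤ := fun h ↦ by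
    simpa [h, top_mul, hδ] using hK δ hδ hδ_one
  refine (pre_prod_le_coveringNumber hsd hδ hδr hAδ.le hK_top).trans ?_
  gcongr 2 ^ (s + d) * ?_ * _
  exact hK δ hδ hδ_one

theorem hausdorffMeasure_prod_le [MeasurableSpace X] [BorelSpace X] [MeasurableSpace (X × Y)]
    [BorelSpace (X × Y)] {s d : ℝ} (hsd : 0 ≤ s + d) {K : Set Y} {C : ℝ≥0} (hC : C ≠ 0)
    (hK : ∀ δ : ℝ≥0, δ ≠ 0 → δ ≤ 1 → coveringNumber δ K * (δ : ℝ≥0∞) ^ d ≤ C) (A : Set X) :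
    μH[s + d] (A ×ˢ K) ≤ 2 ^ (s + d) * C * μH[s] A := by
  have hc_top : (2 ^ (s + d) * C : ℝ≥0∞) ≠ ⊤ := by finiteness
  have hc_zero : (2 ^ (s + d) * C : ℝ≥0∞) ≠ 0 := by simp [hC]
  -- `A ↦ pre r (A ×ˢ K)` is an outer measure on `X`, so `OuterMeasure.le_mkMetric` reduces its
  -- comparison with the Hausdorff measure to sets of small diameter.
  let pre (r : ℝ≥0∞) := OuterMeasure.mkMetric'.pre (fun t : Set (X × Y) ↦ ediam t ^ (s + d)) r
  let ν (r : ℝ≥0∞) := OuterMeasure.map Prod.fst (OuterMeasure.restrict (Prod.snd ⁻¹' K) (pre r))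
  have hν (r : ℝ≥0∞) (A : Set X) : ν r A = pre r (A ×ˢ K) := by simp [ν, Set.prod_eq]
  have hνle (r : ℝ≥0∞) (hr : 0 < r) :
      ν r ≤ (2 ^ (s + d) * C : ℝ≥0∞) • OuterMeasure.mkMetric (· ^ s) := by
    rw [← OuterMeasure.mkMetric_smul _ hc_top hc_zero]
    obtain ⟨ε, hε, hεr⟩ := exists_between (show 0 < min (r / 2) 1 by simp [hr.ne'])
    refine OuterMeasure.le_mkMetric _ _ ε hε fun A hA ↦ (hν r A).trans_le ?_
    obtain ⟨hAr, hA_one⟩ := lt_min_iff.1 (hA.trans_lt hεr)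
    exact pre_prod_le hsd hAr hA_one hK
  rw [Measure.hausdorffMeasure, ← OuterMeasure.coe_mkMetric, OuterMeasure.mkMetric,
    OuterMeasure.mkMetric', OuterMeasure.iSup_apply]
  simp only [OuterMeasure.iSup_apply]
  exact iSup₂_le fun r hr ↦ by
    simpa [hν, Measure.hausdorffMeasure, ← OuterMeasure.coe_mkMetric] using hνle r hr A

theorem dimH_prod_le_dimH_add (S : Set X) {d C : ℝ≥0} (hC : C ≠ 0) {K : Set Y}
    (hK : ∀ δ : ℝ≥0, δ ≠ 0 → δ ≤ 1 → coveringNumber δ K * (δ : ℝ≥0∞) ^ (d : ℝ) ≤ C) :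
    dimH (S ×ˢ K) ≤ dimH S + d := by
  borelize X (X × Y)
  refine ENNReal.le_of_forall_pos_le_add fun ε hε hS ↦ ?_
  obtain ⟨D, hD⟩ : ∃ D : ℝ≥0, (D : ℝ≥0∞) = dimH S :=
    ⟨_, coe_toNNReal (ENNReal.add_ne_top.1 hS.ne).1⟩
  have hzero : μH[((D + ε : ℝ≥0) : ℝ)] S = 0 :=
    hausdorffMeasure_of_dimH_lt (by rw [← hD]; exact_mod_cast lt_add_of_pos_right D hε)
  calc dimH (S ×ˢ K) ≤ (D + ε + d : ℝ≥0) := by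
        refine dimH_le_of_hausdorffMeasure_ne_top (ne_top_of_le_ne_top zero_ne_top ?_)
        rw [NNReal.coe_add _ d]
        exact (hausdorffMeasure_prod_le (by positivity) hC hK S).trans (by rw [hzero, mul_zero])
    _ = dimH S + d + ε := by rw [← hD]; push_cast; ring

theorem lintegral_tsum_indicator_closure_le [MeasurableSpace Y] [OpensMeasurableSpace Y]
    {ν : Measure Y} {s d : ℝ} (hs : 0 ≤ s) (hd : 0 ≤ d) (hν : ∀ B : Set Y, ν B ≤ ediam B ^ d)
    (t : ℕ → Set (X × Y)) :
    ∫⁻ u, ∑' n, (closure (Prod.snd '' t n)).indicator (fun _ ↦ ediam (t n) ^ s) u ∂ν ≤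
      ∑' n, ⨆ _ : (t n).Nonempty, ediam (t n) ^ (s + d) := by
  have hmeas (n : ℕ) : MeasurableSet (closure (Prod.snd '' t n)) := isClosed_closure.measurableSet
  rw [lintegral_tsum fun n ↦ (measurable_const.indicator (hmeas n)).aemeasurable]
  refine ENNReal.tsum_le_tsum fun n ↦ ?_
  rw [lintegral_indicator_const (hmeas n)]
  rcases (t n).eq_empty_or_nonempty with h | h
  · simp [h]
  have hdiam : ediam (closure (Prod.snd '' t n)) ≤ ediam (t n) := by
    rw [ediam_closure]
    simpa using LipschitzWith.prod_snd.ediam_image_le (t n)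
  calc ediam (t n) ^ s * ν (closure (Prod.snd '' t n))
      ≤ ediam (t n) ^ s * ediam (t n) ^ d := by
        gcongr
        exact (hν _).trans (rpow_le_rpow hdiam hd)
    _ = ⨆ _ : (t n).Nonempty, ediam (t n) ^ (s + d) := by
        rw [ciSup_pos h, rpow_add_of_nonneg _ _ hs hd]

theorem hausdorffMeasure_mul_le_prod [MeasurableSpace X] [BorelSpace X] [MeasurableSpace Y]
    [OpensMeasurableSpace Y] [MeasurableSpace (X × Y)] [BorelSpace (X × Y)] {ν : Measure Y}
    {s d : ℝ} (hs : 0 ≤ s) (hd : 0 ≤ d) (hν : ∀ B : Set Y, ν B ≤ ediam B ^ d)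
    (S : Set X) (K : Set Y) : μH[s] S * ν K ≤ μH[s + d] (S ×ˢ K) := by
  rw [Measure.hausdorffMeasure_apply, Measure.hausdorffMeasure_apply]
  simp_rw [ENNReal.iSup_mul]
  refine iSup₂_mono fun r _ ↦ le_iInf fun t ↦ le_iInf fun hcover ↦ le_iInf fun hdiam ↦ ?_
  refine le_trans ?_ (lintegral_tsum_indicator_closure_le hs hd hν t)
  set f : Y → ℝ≥0∞ := fun u ↦
    ∑' n, (closure (Prod.snd '' t n)).indicator (fun _ ↦ ediam (t n) ^ s) u
  have hf : Measurable f :=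
    Measurable.tsum fun n ↦ measurable_const.indicator isClosed_closure.measurableSet
  refine (mul_le_mul_right (measure_mono fun u hu ↦ ?_) _).trans (mul_meas_ge_le_lintegral hf _)
  rw [mem_ofPred_eq]
  -- For `u ∈ K`, the slices at height `u` of a cover of `S ×ˢ K` cover `S`.
  let slice (n : ℕ) : Set X := {x | (x, u) ∈ t n}
  have hslice (n : ℕ) : ediam (slice n) ≤ ediam (t n) := ediam_le fun x hx y hy ↦
    (le_max_left _ _).trans (edist_le_ediam_of_mem (x := (x, u)) (y := (y, u)) hx hy)
  have hslice_cover : S ⊆ ⋃ n, slice n := fun x hx ↦ by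
    simpa [slice] using hcover (mk_mem_prod hx hu)
  refine iInf_le_of_le slice (iInf₂_le_of_le hslice_cover (fun n ↦ (hslice n).trans (hdiam n)) ?_)
  refine ENNReal.tsum_le_tsum fun n ↦ iSup_le fun ⟨x, hx⟩ ↦ ?_
  have hu_mem : u ∈ closure (Prod.snd '' t n) := subset_closure ⟨(x, u), hx, rfl⟩
  rw [indicator_of_mem hu_mem]
  exact rpow_le_rpow (hslice n) hs

theorem dimH_add_le_dimH_prod [MeasurableSpace Y] [OpensMeasurableSpace Y] {ν : Measure Y} {d : ℝ≥0}
    (hν : ∀ B : Set Y, ν B ≤ ediam B ^ (d : ℝ)) {S : Set X} (hS : S.Nonempty) {K : Set Y}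
    (hK : ν K ≠ 0) : dimH S + d ≤ dimH (S ×ˢ K) := by
  borelize X (X × Y)
  have hprod (s : ℝ≥0) (hs : μH[s] S ≠ 0) : (s + d : ℝ≥0) ≤ dimH (S ×ˢ K) :=
    le_dimH_of_hausdorffMeasure_ne_zero <| by
      have h := hausdorffMeasure_mul_le_prod s.coe_nonneg d.coe_nonneg hν S K
      exact (((mul_ne_zero hs hK).bot_lt).trans_le h).ne'
  have hzero : μH[((0 : ℝ≥0) : ℝ)] S ≠ 0 :=
    (one_pos.trans_le (Measure.one_le_hausdorffMeasure_zero_of_nonempty hS)).ne'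
  have hd : (d : ℝ≥0∞) ≤ dimH (S ×ˢ K) := by simpa using hprod 0 hzero
  refine add_le_of_le_tsub_right_of_le hd (le_of_forall_lt_imp_le_of_dense fun s hs ↦ ?_)
  lift s to ℝ≥0 using hs.ne_top
  refine ENNReal.le_sub_of_add_le_right coe_ne_top ?_
  exact_mod_cast hprod s (by simp [hausdorffMeasure_of_lt_dimH hs])

variable {E : Type*} [NormedAddCommGroup E] [NormedSpace ℝ E] [FiniteDimensional ℝ E]

theorem addHaar_ball_nnreal [MeasurableSpace E] [BorelSpace E] (μ : Measure E) [μ.IsAddHaarMeasure]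
    (x : E) {r : ℝ≥0} (hr : r ≠ 0) : μ (ball x r) = r ^ finrank ℝ E * μ (ball 0 1) := by
  rw [μ.addHaar_ball_of_pos x (by positivity), ofReal_pow r.coe_nonneg, ofReal_coe_nnreal]

theorem encard_mul_pow_le_of_isSeparated {x : E} {R δ : ℝ≥0} (hδ₀ : δ ≠ 0) (hδ : δ ≤ 1) {C : Set E}
    (hCR : C ⊆ ball x R) (hC : IsSeparated δ C) :
    (C.encard : ℝ≥0∞) * (δ : ℝ≥0∞) ^ finrank ℝ E ≤ (2 * (R + 1)) ^ finrank ℝ E := by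
  borelize E
  let μ : Measure E := Measure.addHaar
  have hdisj : Pairwise (Function.onFun Disjoint fun y : C ↦ ball (y : E) (δ / 2 : ℝ≥0)) := by
    intro y z hyz
    have hδ_lt : (δ : ℝ) < dist (y : E) z := by
      have h : (δ : ℝ≥0∞) < edist (y : E) z := hC y.2 z.2 (Subtype.coe_injective.ne hyz)
      rw [edist_nndist] at h
      exact_mod_cast h
    exact ball_disjoint_ball (by push_cast; linarith)
  have hsub : ⋃ y : C, ball (y : E) (δ / 2 : ℝ≥0) ⊆ ball x (R + 1 : ℝ≥0) := by
    refine iUnion_subset fun y ↦ ball_subset_ball' ?_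
    have hy : dist (y : E) x < R := hCR y.2
    push_cast
    linarith [NNReal.coe_le_one.2 hδ]
  have hvol : C.encard * μ (ball (0 : E) (δ / 2 : ℝ≥0)) ≤ μ (ball x (R + 1 : ℝ≥0)) :=
    calc C.encard * μ (ball (0 : E) (δ / 2 : ℝ≥0))
        = ∑' y : C, μ (ball (y : E) (δ / 2 : ℝ≥0)) := by
          simp_rw [fun y : E ↦ Measure.addHaar_ball_center μ y ((δ / 2 : ℝ≥0) : ℝ),
            ENNReal.tsum_const, ENat.card_coe_set_eq]
      _ ≤ μ (⋃ y : C, ball (y : E) (δ / 2 : ℝ≥0)) :=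
          tsum_meas_le_meas_iUnion_of_disjoint μ (fun _ ↦ measurableSet_ball) hdisj
      _ ≤ μ (ball x (R + 1 : ℝ≥0)) := measure_mono hsub
  rw [addHaar_ball_nnreal μ 0 (div_ne_zero hδ₀ two_ne_zero),
    addHaar_ball_nnreal μ x (by positivity)] at hvol
  rw [← mul_assoc, ENNReal.mul_le_mul_iff_left (measure_ball_pos _ _ one_pos).ne'
    measure_ball_lt_top.ne] at hvol
  have hδ_half : (δ : ℝ≥0∞) = 2 * (δ / 2 : ℝ≥0) := by
    rw [← ENNReal.coe_ofNat, ← ENNReal.coe_mul, mul_div_cancel₀ _ two_ne_zero]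
  rw [hδ_half, mul_pow, mul_pow, mul_left_comm]
  gcongr
  exact_mod_cast hvol

theorem coveringNumber_ball_mul_le (x : E) {R δ : ℝ≥0} (hδ₀ : δ ≠ 0) (hδ : δ ≤ 1) :
    coveringNumber δ (ball x R) * (δ : ℝ≥0∞) ^ finrank ℝ E ≤ (2 * (R + 1)) ^ finrank ℝ E := by
  refine (mul_le_mul_left (ENat.toENNReal_mono (coveringNumber_le_packingNumber _ _)) _).trans ?_
  simp_rw [packingNumber, ENat.toENNReal_iSup, ENNReal.iSup_mul]
  exact iSup_le fun C ↦ iSup₂_le fun hCR hC ↦ encard_mul_pow_le_of_isSeparated hδ₀ hδ hCR hC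

theorem dimH_prod_ball_le (S : Set X) (x : E) (R : ℝ≥0) :
    dimH (S ×ˢ ball x R) ≤ dimH S + finrank ℝ E := by
  refine dimH_prod_le_dimH_add S (d := finrank ℝ E) (C := (2 * (R + 1)) ^ finrank ℝ E)
    (by positivity) fun δ hδ₀ hδ ↦ ?_
  simpa using coveringNumber_ball_mul_le x hδ₀ hδ

theorem dimH_prod_univ_le (S : Set X) :
    dimH (S ×ˢ (univ : Set E)) ≤ dimH S + finrank ℝ E := by
  rw [← iUnion_ball_nat (0 : E), prod_iUnion, dimH_iUnion]
  exact iSup_le fun R ↦ dimH_prod_ball_le S 0 R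

theorem addHaar_le_mul_ediam_pow [MeasurableSpace E] [BorelSpace E] (μ : Measure E)
    [μ.IsAddHaarMeasure] (B : Set E) : μ B ≤ μ (ball 0 1) * ediam B ^ finrank ℝ E := by
  rcases B.eq_empty_or_nonempty with rfl | ⟨x, hx⟩
  · simp
  by_cases hB : ediam B = ⊤
  · have hE : finrank ℝ E ≠ 0 := fun h ↦ by
      have := finrank_zero_iff.1 h
      simp [ediam_subsingleton B.subsingleton_of_subsingleton] at hB
    simp [hB, hE, ENNReal.mul_top, (measure_ball_pos μ (0 : E) one_pos).ne']
  · have hsub : B ⊆ closedBall x (ediam B).toReal := fun y hy ↦ by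
      rw [mem_closedBall, dist_edist]
      exact toReal_mono hB (edist_le_ediam_of_mem hy hx)
    refine (measure_mono hsub).trans_eq ?_
    rw [μ.addHaar_closedBall x toReal_nonneg, ofReal_pow toReal_nonneg, ofReal_toReal hB, mul_comm]

theorem dimH_add_finrank_le_dimH_prod {S : Set X} (hS : S.Nonempty) {K : Set E} {y : E}
    (hK : K ∈ 𝓝 y) : dimH S + finrank ℝ E ≤ dimH (S ×ˢ K) := by
  borelize E
  let μ : Measure E := Measure.addHaar
  have hμ : μ (ball 0 1) ≠ ⊤ := measure_ball_lt_top.ne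
  refine dimH_add_le_dimH_prod (ν := (μ (ball 0 1))⁻¹ • μ) (d := finrank ℝ E) (fun B ↦ ?_) hS ?_
  · rw [Measure.smul_apply, smul_eq_mul, mul_comm, ← div_eq_mul_inv]
    exact ENNReal.div_le_of_le_mul' (by simpa using addHaar_le_mul_ediam_pow μ B)
  · simpa [hμ, Measure.smul_apply] using (Measure.measure_pos_of_mem_nhds μ hK).ne'

end Prod

section Submersion

theorem exists_bilipschitz_implicitChart {𝕜 E F : Type*} [NontriviallyNormedField 𝕜]
    [CompleteSpace 𝕜] [NormedAddCommGroup E] [NormedSpace 𝕜 E] [CompleteSpace E]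
    [NormedAddCommGroup F] [NormedSpace 𝕜 F] [FiniteDimensional 𝕜 F] {f : E → F}
    {f' : E →L[𝕜] F} {a : E} (hf : HasStrictFDerivAt f f' a) (hf' : f'.range = ⊤) :
    ∃ e : OpenPartialHomeomorph E (F × f'.ker), a ∈ e.source ∧ (∀ x, (e x).1 = f x) ∧
      (∃ K, LipschitzOnWith K e e.source) ∧ ∃ K, LipschitzOnWith K e.symm e.target := by
  have := FiniteDimensional.complete 𝕜 F
  let φ := hf.implicitFunctionDataOfComplemented f f' hf'
    f'.ker_closedComplemented_of_finiteDimensional_range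
  let e := φ.toOpenPartialHomeomorph
  have ha : a ∈ e.source := φ.pt_mem_toOpenPartialHomeomorph_source
  have he : HasStrictFDerivAt e _ a := φ.hasStrictFDerivAt
  have he_symm : HasStrictFDerivAt e.symm _ (e a) :=
    e.hasStrictFDerivAt_symm (e.map_source ha) (by rwa [e.left_inv ha])
  obtain ⟨K, U, hU, hKU⟩ := he.exists_lipschitzOnWith
  obtain ⟨K', V, hV, hKV⟩ := he_symm.exists_lipschitzOnWith
  have hUV : U ∩ e ⁻¹' V ∈ 𝓝 a := inter_mem hU (he.continuousAt.preimage_mem_nhds hV)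
  refine ⟨e.restr (U ∩ e ⁻¹' V), ?_, fun x ↦ rfl, ⟨K, hKU.mono ?_⟩, K', hKV.mono ?_⟩
  · rw [e.restr_source]
    exact ⟨ha, mem_interior_iff_mem_nhds.2 hUV⟩
  · rw [e.restr_source]
    exact fun x hx ↦ (interior_subset hx.2).1
  · rintro y ⟨hy, hy'⟩
    rw [← e.right_inv hy]
    exact (interior_subset hy').2

theorem dimH_add_le_of_forall_mem_nhdsWithin {X : Type*} [EMetricSpace X]
    [SecondCountableTopology X] {s : Set X} (hs : s.Nonempty) {c d : ℝ≥0∞} (hc : c ≠ ∞)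
    (h : ∀ x ∈ s, ∃ t ∈ 𝓝[s] x, dimH t + c ≤ d) : dimH s + c ≤ d := by
  obtain ⟨x, hx⟩ := hs
  obtain ⟨t, -, ht⟩ := h x hx
  refine add_le_of_le_tsub_right_of_le (le_add_self.trans ht) (le_of_not_gt fun hlt ↦ ?_)
  obtain ⟨x, hx, hxs⟩ := exists_mem_nhdsWithin_lt_dimH_of_lt_dimH hlt
  obtain ⟨t, hts, ht⟩ := h x hx
  exact (hxs t hts).not_ge (ENNReal.le_sub_of_add_le_right hc ht)

theorem finrank_add_finrank_ker {K V W : Type*} [DivisionRing K] [AddCommGroup V] [Module K V]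
    [FiniteDimensional K V] [AddCommGroup W] [Module K W] {f : V →ₗ[K] W} (hf : f.range = ⊤) :
    finrank K W + finrank K f.ker = finrank K V := by
  rw [← f.finrank_range_add_finrank_ker, hf, finrank_top]

variable {E F : Type*} [NormedAddCommGroup E] [NormedSpace ℝ E] [FiniteDimensional ℝ E]
  [NormedAddCommGroup F] [NormedSpace ℝ F] [FiniteDimensional ℝ F] {f : E → F}

theorem exists_nhdsWithin_dimH_preimage_add_finrank_le {f' : E →L[ℝ] F} {a : E}
    (hf : HasStrictFDerivAt f f' a) (hf' : f'.range = ⊤) (S : Set F) :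
    ∃ t ∈ 𝓝[f ⁻¹' S] a, dimH t + finrank ℝ F ≤ dimH S + finrank ℝ E := by
  have := FiniteDimensional.complete ℝ E
  obtain ⟨e, ha, he, -, K, hK⟩ := exists_bilipschitz_implicitChart hf hf'
  refine ⟨e.source ∩ f ⁻¹' S, inter_mem (mem_nhdsWithin_of_mem_nhds (e.open_source.mem_nhds ha))
    self_mem_nhdsWithin, ?_⟩
  have hsub : e.source ∩ f ⁻¹' S ⊆ e.symm '' (e.target ∩ S ×ˢ univ) := fun x hx ↦
    ⟨e x, ⟨e.map_source hx.1, by rw [he]; exact hx.2, mem_univ _⟩, e.left_inv hx.1⟩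
  calc dimH (e.source ∩ f ⁻¹' S) + finrank ℝ F
      ≤ dimH (e.target ∩ S ×ˢ (univ : Set f'.ker)) + finrank ℝ F := by
        gcongr
        exact (dimH_mono hsub).trans (hK.mono inter_subset_left).dimH_image_le
    _ ≤ dimH S + finrank ℝ f'.ker + finrank ℝ F := by
        gcongr
        exact (dimH_mono inter_subset_right).trans (dimH_prod_univ_le S)
    _ = dimH S + finrank ℝ E := by
        rw [← finrank_add_finrank_ker hf', Nat.cast_add]; ring

theorem exists_nhdsWithin_dimH_add_finrank_le_preimage {f' : E →L[ℝ] F} {a : E}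
    (hf : HasStrictFDerivAt f f' a) (hf' : f'.range = ⊤) {S : Set F} (haS : f a ∈ S) :
    ∃ t ∈ 𝓝[S] f a, dimH t + finrank ℝ E ≤ dimH (f ⁻¹' S) + finrank ℝ F := by
  have := FiniteDimensional.complete ℝ E
  obtain ⟨e, ha, he, ⟨K, hK⟩, -⟩ := exists_bilipschitz_implicitChart hf hf'
  obtain ⟨U, hU, V, hV, hUV⟩ :=
    mem_nhds_prod_iff.1 (e.open_target.mem_nhds (e.map_source ha))
  replace hU : U ∈ 𝓝 (f a) := he a ▸ hU
  refine ⟨S ∩ U, inter_mem self_mem_nhdsWithin (mem_nhdsWithin_of_mem_nhds hU), ?_⟩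
  have hsub : (S ∩ U) ×ˢ V ⊆ e '' (e.source ∩ f ⁻¹' S) := fun y hy ↦ by
    have hy' : y ∈ e.target := hUV ⟨hy.1.2, hy.2⟩
    refine ⟨e.symm y, ⟨e.map_target hy', ?_⟩, e.right_inv hy'⟩
    rw [mem_preimage, ← he, e.right_inv hy']
    exact hy.1.1
  calc dimH (S ∩ U) + finrank ℝ E
      = dimH (S ∩ U) + finrank ℝ f'.ker + finrank ℝ F := by
        rw [← finrank_add_finrank_ker hf', Nat.cast_add]; ring
    _ ≤ dimH ((S ∩ U) ×ˢ V) + finrank ℝ F := by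
        gcongr
        exact dimH_add_finrank_le_dimH_prod (S := S ∩ U) ⟨f a, haS, mem_of_mem_nhds hU⟩ hV
    _ ≤ dimH (f ⁻¹' S) + finrank ℝ F := by
        gcongr
        exact (dimH_mono hsub).trans <| (hK.mono inter_subset_left).dimH_image_le.trans <|
          dimH_mono inter_subset_right

theorem dimH_preimage_add_finrank {S : Set F} (hS : S.Nonempty) (hrange : S ⊆ range f)
    (hf : ∀ a ∈ f ⁻¹' S, ∃ f' : E →L[ℝ] F, HasStrictFDerivAt f f' a ∧ f'.range = ⊤) :
    dimH (f ⁻¹' S) + finrank ℝ F = dimH S + finrank ℝ E := by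
  apply le_antisymm
  · refine dimH_add_le_of_forall_mem_nhdsWithin (hS.preimage' hrange) (by simp) fun a ha ↦ ?_
    obtain ⟨f', hf', hsurj⟩ := hf a ha
    exact exists_nhdsWithin_dimH_preimage_add_finrank_le hf' hsurj S
  · refine dimH_add_le_of_forall_mem_nhdsWithin hS (by simp) fun y hy ↦ ?_
    obtain ⟨a, rfl⟩ := hrange hy
    obtain ⟨f', hf', hsurj⟩ := hf a hy
    exact exists_nhdsWithin_dimH_add_finrank_le_preimage hf' hsurj hy

end Submersion

end HausdorffDimension

section Matrix

open Module Set

attribute [local instance] Matrix.normedSpace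

section Factorization

theorem exists_mul_eq_of_rank_le {K m n : Type*} [Field K] [Finite m] [Fintype n]
    {A : Matrix m n K} {r : ℕ} (hA : A.rank ≤ r) :
    ∃ (P : Matrix m (Fin r) K) (Q : Matrix (Fin r) n K), P * Q = A := by
  classical
  have := Fintype.ofFinite m
  obtain ⟨i, hi⟩ : ∃ i : A.mulVecLin.range →ₗ[K] Fin r → K, Function.Injective i := by
    rw [← lift_rank_le_iff_exists_linearMap, ← finrank_eq_rank, ← finrank_eq_rank,
      finrank_fin_fun, ← Matrix.rank]
    simpa using hA
  obtain ⟨p, hp⟩ := i.exists_leftInverse_of_injective (LinearMap.ker_eq_bot.2 hi)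
  refine ⟨(A.mulVecLin.range.subtype ∘ₗ p).toMatrix', (i ∘ₗ A.mulVecLin.rangeRestrict).toMatrix',
    ?_⟩
  rw [← LinearMap.toMatrix'_comp, LinearMap.comp_assoc, ← LinearMap.comp_assoc _ i, hp,
    LinearMap.id_comp, LinearMap.subtype_comp_codRestrict,
    ← toLin'_apply', LinearMap.toMatrix'_toLin']

theorem dimH_setOf_rank_le {m n : Type*} [Fintype m] [Fintype n] (r : ℕ) :
    dimH {A : Matrix m n ℝ | A.rank ≤ r} ≤ (r * (Fintype.card m + Fintype.card n) : ℕ) := by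
  let μ : Matrix m (Fin r) ℝ × Matrix (Fin r) n ℝ → Matrix m n ℝ := fun P ↦ P.1 * P.2
  have hμ : ContDiff ℝ 1 μ := by
    refine contDiff_pi.2 fun i ↦ contDiff_pi.2 fun j ↦ ?_
    simp only [μ, Matrix.mul_apply]
    fun_prop
  calc dimH {A : Matrix m n ℝ | A.rank ≤ r} ≤ dimH (range μ) := dimH_mono fun A hA ↦ by
        obtain ⟨P, Q, h⟩ := exists_mul_eq_of_rank_le hA
        exact ⟨(P, Q), h⟩
    _ ≤ finrank ℝ (Matrix m (Fin r) ℝ × Matrix (Fin r) n ℝ) := hμ.dimH_range_le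
    _ = (r * (Fintype.card m + Fintype.card n) : ℕ) := by
        rw [finrank_prod, finrank_matrix, finrank_matrix, Fintype.card_fin, finrank_self]
        congr 1; ring

open scoped MatrixOrder ComplexOrder Matrix.Norms.L2Operator in
theorem exists_mul_conjTranspose_eq_of_posSemidef {𝕜 m n : Type*} [RCLike 𝕜] [Finite m]
    [Fintype n] (e : m ↪ n) {S : Matrix m m 𝕜} (hS : S.PosSemidef) :
    ∃ A : Matrix m n 𝕜, A * Aᴴ = S := by
  classical
  have := Fintype.ofFinite m
  obtain ⟨R, hR⟩ := CStarAlgebra.nonneg_iff_eq_mul_star_self.1 hS.nonneg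
  let J : Matrix m n 𝕜 := (1 : Matrix n n 𝕜).submatrix e id
  have hJ : J * Jᴴ = 1 := by
    rw [conjTranspose_submatrix, conjTranspose_one, ← submatrix_mul _ _ _ _ _ Function.bijective_id,
      Matrix.one_mul, submatrix_one_embedding]
  refine ⟨R * J, ?_⟩
  rw [conjTranspose_mul, Matrix.mul_assoc, ← Matrix.mul_assoc J, hJ, Matrix.one_mul, hR,
    star_eq_conjTranspose]

theorem isUnit_of_card_le_rank {K m : Type*} [Field K] [Fintype m] [DecidableEq m]
    {M : Matrix m m K} (hM : Fintype.card m ≤ M.rank) : IsUnit M := by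
  refine mulVec_surjective_iff_isUnit.1 (LinearMap.range_eq_top (f := M.mulVecLin) |>.1 ?_)
  refine Submodule.eq_top_of_finrank_eq ?_
  rw [finrank_fintype_fun_eq_card]
  exact M.rank_le_card_height.antisymm hM

theorem exists_linearIsometryEquiv_apply_eq {𝕜 V W : Type*} [RCLike 𝕜] [NormedAddCommGroup V]
    [InnerProductSpace 𝕜 V] [FiniteDimensional 𝕜 V] [AddCommGroup W] [Module 𝕜 W]
    {S T : W →ₗ[𝕜] V} (hST : ∀ x, ‖S x‖ = ‖T x‖) : ∃ U : V ≃ₗᵢ[𝕜] V, ∀ x, U (S x) = T x := by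
  obtain ⟨σ, hσ⟩ := S.rangeRestrict.exists_rightInverse_of_surjective S.range_rangeRestrict
  have hσ' (y : S.range) : S (σ y) = y := congrArg Subtype.val (LinearMap.congr_fun hσ y)
  let L : S.range →ₗᵢ[𝕜] V := ⟨T ∘ₗ σ, fun y ↦ by
    rw [LinearMap.comp_apply, ← hST, hσ', Submodule.coe_norm]⟩
  refine ⟨L.extend.toLinearIsometryEquiv rfl, fun x ↦ ?_⟩
  calc L.extend (S.rangeRestrict x) = T (σ (S.rangeRestrict x)) := L.extend_apply _
    _ = T x := by
      rw [← sub_eq_zero, ← map_sub, ← norm_eq_zero, ← hST, map_sub, hσ',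
        LinearMap.codRestrict_apply, sub_self, norm_zero]

theorem exists_linearIsometryEquiv_det_eq_one_apply_eq {V W : Type*} [NormedAddCommGroup V]
    [InnerProductSpace ℝ V] [FiniteDimensional ℝ V] [AddCommGroup W] [Module ℝ W]
    {S T : W →ₗ[ℝ] V} (hS : S.range ≠ ⊤) (hST : ∀ x, ‖S x‖ = ‖T x‖) :
    ∃ U : V ≃ₗᵢ[ℝ] V, LinearMap.det (U.toLinearEquiv : V →ₗ[ℝ] V) = 1 ∧ ∀ x, U (S x) = T x := by
  obtain ⟨U, hU⟩ := exists_linearIsometryEquiv_apply_eq hST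
  have hdet : |LinearMap.det (U.toLinearEquiv : V →ₗ[ℝ] V)| = 1 := by
    rw [← LinearMap.normDet_eq_abs_det]
    exact U.toLinearIsometry.normDet_eq_one
  rcases eq_or_eq_neg_of_abs_eq hdet with hdet | hdet
  · exact ⟨U, hdet, hU⟩
  -- `U` reverses orientation: precompose it with a reflection fixing the range of `S`.
  obtain ⟨v, hv, hv0⟩ :=
    Submodule.exists_mem_ne_zero_of_ne_bot (mt Submodule.orthogonal_eq_bot_iff.1 hS)
  let R := (Submodule.span ℝ {v})ᗮ.reflection
  have hR : LinearMap.det (R.toLinearEquiv : V →ₗ[ℝ] V) = -1 := by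
    rw [Submodule.det_reflection, Submodule.orthogonal_orthogonal, finrank_span_singleton hv0,
      pow_one]
  refine ⟨R.trans U, ?_, fun x ↦ ?_⟩
  · change LinearMap.det ((U.toLinearEquiv : V →ₗ[ℝ] V) ∘ₗ (R.toLinearEquiv : V →ₗ[ℝ] V)) = 1
    rw [LinearMap.det_comp, hdet, hR, neg_mul_neg, one_mul]
  · have hSx : R (S x) = S x := Submodule.reflection_mem_subspace_eq_self <|
      Submodule.mem_orthogonal_singleton_iff_inner_left.2 (hv _ ⟨x, rfl⟩)
    rw [LinearIsometryEquiv.trans_apply, hSx, hU]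

theorem norm_toEuclideanLin_apply_sq {𝕜 m n : Type*} [RCLike 𝕜] [Fintype m] [Fintype n]
    [DecidableEq n] (A : Matrix m n 𝕜) (x : EuclideanSpace 𝕜 n) :
    ‖A.toEuclideanLin x‖ ^ 2 = RCLike.re (inner 𝕜 ((Aᴴ * A).toEuclideanLin x) x) := by
  classical
  rw [toLpLin_mul_same, LinearMap.comp_apply, toEuclideanLin_conjTranspose_eq_adjoint,
    LinearMap.adjoint_inner_left, inner_self_eq_norm_sq]

theorem exists_mem_specialOrthogonalGroup_mul_eq {m n : Type*} [Fintype m] [Fintype n]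
    [DecidableEq n] {A B : Matrix n m ℝ} (hA : A.rank < Fintype.card n)
    (hAB : Aᴴ * A = Bᴴ * B) : ∃ h ∈ specialOrthogonalGroup n ℝ, h * A = B := by
  classical
  have hrange : A.toEuclideanLin.range ≠ ⊤ := fun htop ↦ hA.ne <| by
    rw [A.rank_eq_finrank_range_toLin (PiLp.basisFun 2 ℝ n) (PiLp.basisFun 2 ℝ m),
      ← toLpLin_eq_toLin, htop, finrank_top, finrank_euclideanSpace]
  obtain ⟨U, hdet, hU⟩ := exists_linearIsometryEquiv_det_eq_one_apply_eq hrange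
    fun x ↦ show ‖A.toEuclideanLin x‖ = ‖B.toEuclideanLin x‖ by
      rw [← sq_eq_sq₀ (norm_nonneg _) (norm_nonneg _), norm_toEuclideanLin_apply_sq,
        norm_toEuclideanLin_apply_sq, hAB]
  let b := EuclideanSpace.basisFun n ℝ
  let h := LinearMap.toMatrix b.toBasis b.toBasis (U.toLinearEquiv : EuclideanSpace ℝ n →ₗ[ℝ] _)
  have hh : h.toEuclideanLin = U.toLinearEquiv := by
    rw [toEuclideanLin_eq_toLin_orthonormal, toLin_toMatrix]
  refine ⟨h, mem_specialOrthogonalGroup_iff.2 ⟨U.toMatrix_mem_unitaryGroup b b,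
    (LinearMap.det_toMatrix _ _).trans hdet⟩, toEuclideanLin.injective ?_⟩
  rw [toLpLin_mul_same, hh]
  exact LinearMap.ext hU

end Factorization

/-- The vector space of symmetric real matrices, with the norm induced by the entrywise supremum
norm on matrices. -/
abbrev SymMatrix (m : Type*) : Submodule ℝ (Matrix m m ℝ) :=
  selfAdjoint.submodule ℝ (Matrix m m ℝ)

variable {m n : Type*} [Fintype n]

/-- The symmetric bilinear map `(A, B) ↦ ½ (A Bᴴ + B Aᴴ)`, whose associated quadratic map is the
Gram map `rowGram`. -/
noncomputable def rowGramBilin :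
    Matrix m n ℝ →ₗ[ℝ] Matrix m n ℝ →ₗ[ℝ] SymMatrix m :=
  let π : Matrix m m ℝ →ₗ[ℝ] SymMatrix m := selfAdjointPart ℝ
  LinearMap.mk₂ ℝ (fun A B ↦ π (A * Bᴴ))
    (fun A A' B ↦ by rw [Matrix.add_mul, map_add])
    (fun c A B ↦ by rw [Matrix.smul_mul, map_smul])
    (fun A B B' ↦ by rw [conjTranspose_add, Matrix.mul_add, map_add])
    (fun c A B ↦ by rw [conjTranspose_smul, star_trivial, Matrix.mul_smul, map_smul])

/-- The Gram matrix `A Aᴴ` of the rows of a real matrix `A`, as a point of the space of symmetric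
matrices. -/
noncomputable def rowGram (A : Matrix m n ℝ) : SymMatrix m := rowGramBilin A A

theorem coe_rowGram (A : Matrix m n ℝ) : (rowGram A : Matrix m m ℝ) = A * Aᴴ :=
  IsSelfAdjoint.coe_selfAdjointPart_apply ℝ (isHermitian_mul_conjTranspose_self A)

theorem exists_hasStrictFDerivAt_rowGram [Fintype m] [DecidableEq m] {A : Matrix m n ℝ}
    (hA : IsUnit (A * Aᴴ)) :
    ∃ f' : Matrix m n ℝ →L[ℝ] SymMatrix m, HasStrictFDerivAt rowGram f' A ∧ f'.range = ⊤ := by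
  let β : Matrix m n ℝ →L[ℝ] Matrix m n ℝ →L[ℝ] SymMatrix m :=
    rowGramBilin.toContinuousBilinearMap
  refine ⟨_, β.hasStrictFDerivAt_of_bilinear (hasStrictFDerivAt_id A) (hasStrictFDerivAt_id A),
    LinearMap.range_eq_top.2 fun S ↦ ?_⟩
  have hS : (S : Matrix m m ℝ)ᴴ = S := S.2
  let H : Matrix m n ℝ := (2⁻¹ : ℝ) • ((S : Matrix m m ℝ) * ((A * Aᴴ)⁻¹ * A))
  have hH : H * Aᴴ = (2⁻¹ : ℝ) • (S : Matrix m m ℝ) := by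
    rw [Matrix.smul_mul, Matrix.mul_assoc, Matrix.mul_assoc,
      nonsing_inv_mul _ ((isUnit_iff_isUnit_det _).1 hA), Matrix.mul_one]
  have hH' : A * Hᴴ = (2⁻¹ : ℝ) • (S : Matrix m m ℝ) := by
    rw [← conjTranspose_conjTranspose (A * Hᴴ), conjTranspose_mul, conjTranspose_conjTranspose,
      hH, conjTranspose_smul, hS, star_trivial]
  refine ⟨H, Subtype.ext ?_⟩
  change (selfAdjointPart ℝ (A * Hᴴ) + selfAdjointPart ℝ (H * Aᴴ) : Matrix m m ℝ) = S
  rw [hH, hH', IsSelfAdjoint.coe_selfAdjointPart_apply ℝ (.smul (.all _) hS), ← add_smul]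
  norm_num

theorem coe_rowGram_mul [Fintype m] (M : Matrix m m ℝ) (A : Matrix m n ℝ) :
    (rowGram (M * A) : Matrix m m ℝ) = M * (rowGram A : Matrix m m ℝ) * Mᴴ := by
  simp only [coe_rowGram, conjTranspose_mul, Matrix.mul_assoc]

theorem rowGram_mul_of_mem_orthogonalGroup [DecidableEq n] (A : Matrix m n ℝ) {h : Matrix n n ℝ}
    (hh : h ∈ orthogonalGroup n ℝ) : rowGram (A * h) = rowGram A := by
  refine Subtype.ext ?_
  rw [coe_rowGram, coe_rowGram, conjTranspose_mul, Matrix.mul_assoc, ← Matrix.mul_assoc h,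
    ← star_eq_conjTranspose h, mem_unitaryGroup_iff.1 hh, Matrix.one_mul]

theorem exists_mem_specialOrthogonalGroup_mul_transpose_eq [Fintype m] [DecidableEq n]
    {A B : Matrix m n ℝ} (hmn : Fintype.card m < Fintype.card n) (hAB : rowGram A = rowGram B) :
    ∃ h ∈ specialOrthogonalGroup n ℝ, A * hᵀ = B := by
  have hrank : Aᴴ.rank < Fintype.card n := Aᴴ.rank_le_card_width.trans_lt hmn
  have hgram : Aᴴᴴ * Aᴴ = Bᴴᴴ * Bᴴ := by
    rw [conjTranspose_conjTranspose, conjTranspose_conjTranspose, ← coe_rowGram, hAB, coe_rowGram]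
  obtain ⟨h, hh, hhA⟩ := exists_mem_specialOrthogonalGroup_mul_eq hrank hgram
  refine ⟨h, hh, ?_⟩
  rw [← conjTranspose_eq_transpose_of_trivial, ← conjTranspose_conjTranspose A,
    ← conjTranspose_mul, hhA, conjTranspose_conjTranspose]

section ConjOrbit

variable [Fintype m] [DecidableEq m] {G : Subgroup (orthogonalGroup m ℝ)}

/-- The orbit of a symmetric matrix `S` under the conjugation action `g · S = g S gᴴ` of a group `G`
of orthogonal matrices. -/
def conjOrbit (G : Subgroup (orthogonalGroup m ℝ)) (S : SymMatrix m) : Set (SymMatrix m) :=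
  {T | ∃ g ∈ G, (T : Matrix m m ℝ) = g * (S : Matrix m m ℝ) * (g : Matrix m m ℝ)ᴴ}

theorem conjOrbit_nonempty (S : SymMatrix m) : (conjOrbit G S).Nonempty :=
  ⟨S, 1, G.one_mem, by simp⟩

theorem conjOrbit_rowGram_subset_range (A : Matrix m n ℝ) :
    conjOrbit G (rowGram A) ⊆ range (rowGram (n := n)) := by
  rintro T ⟨g, -, hT⟩
  exact ⟨(g : Matrix m m ℝ) * A, Subtype.ext ((coe_rowGram_mul _ A).trans hT.symm)⟩

theorem isUnit_of_mem_conjOrbit {S T : SymMatrix m} (hT : T ∈ conjOrbit G S)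
    (hS : IsUnit (S : Matrix m m ℝ)) : IsUnit (T : Matrix m m ℝ) := by
  obtain ⟨g, -, hg⟩ := hT
  have hg_unit : IsUnit (g : Matrix m m ℝ) := Unitary.isUnit_coe
  exact hg ▸ (hg_unit.mul hS).mul hg_unit.star

/-- The largest Hausdorff dimension of the conjugation orbit of a positive definite matrix. -/
noncomputable def posDefOrbitDim (G : Subgroup (orthogonalGroup m ℝ)) : ℝ≥0∞ :=
  ⨆ S : {S : SymMatrix m // (S : Matrix m m ℝ).PosDef}, dimH (conjOrbit G (S : SymMatrix m))

end ConjOrbit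

theorem rank_lt_of_not_isUnit_mul_conjTranspose [Fintype m] [DecidableEq m] {A : Matrix m n ℝ}
    (hA : ¬IsUnit (A * Aᴴ)) : A.rank < Fintype.card m := by
  rw [← rank_self_mul_conjTranspose]
  exact lt_of_not_ge (mt isUnit_of_card_le_rank hA)

section Orbit

variable {k n : ℕ} (G : Subgroup (orthogonalGroup (Fin k) ℝ))

theorem orbit11_eq_preimage_conjOrbit (hkn : k < n) (A : Matrix (Fin k) (Fin n) ℝ) :
    orbit11 G A = rowGram ⁻¹' conjOrbit G (rowGram A) := by
  ext B
  constructor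
  · rintro ⟨g, hg, h, hh, rfl⟩
    refine ⟨g, hg, ?_⟩
    rw [rowGram_mul_of_mem_orthogonalGroup, coe_rowGram_mul]
    exact transpose_mem_unitaryGroup_iff.2 (mem_specialOrthogonalGroup_iff.1 hh).1
  · rintro ⟨g, hg, hB⟩
    have hgram : rowGram ((g : Matrix (Fin k) (Fin k) ℝ) * A) = rowGram B :=
      Subtype.ext ((coe_rowGram_mul _ A).trans hB.symm)
    obtain ⟨h, hh, hhB⟩ := exists_mem_specialOrthogonalGroup_mul_transpose_eq (by simpa) hgram
    exact ⟨g, hg, h, hh, hhB.symm⟩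

theorem dimH_orbit11_add_finrank (hkn : k < n) {A : Matrix (Fin k) (Fin n) ℝ}
    (hA : IsUnit (A * Aᴴ)) :
    dimH (orbit11 G A) + finrank ℝ (SymMatrix (Fin k)) =
      dimH (conjOrbit G (rowGram A)) + (k * n : ℕ) := by
  rw [orbit11_eq_preimage_conjOrbit G hkn, dimH_preimage_add_finrank (conjOrbit_nonempty _)
    (conjOrbit_rowGram_subset_range A) fun B hB ↦ exists_hasStrictFDerivAt_rowGram ?_]
  · simp [finrank_matrix]
  · rw [← coe_rowGram] at hA ⊢
    exact isUnit_of_mem_conjOrbit hB hA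

theorem dimH_orbit11_le {r : ℕ} {A : Matrix (Fin k) (Fin n) ℝ} (hA : A.rank ≤ r) :
    dimH (orbit11 G A) ≤ (r * (k + n) : ℕ) := by
  have hsub : orbit11 G A ⊆ {B | B.rank ≤ r} := by
    rintro _ ⟨g, -, h, -, rfl⟩
    exact ((rank_mul_le_left _ _).trans (rank_mul_le_right _ _)).trans hA
  simpa using (dimH_mono hsub).trans (dimH_setOf_rank_le r)

theorem sSup_dimH_orbit11 {d : ℕ} (hkn : k < n) (hd : finrank ℝ (SymMatrix (Fin k)) + d = k * n)
    (hd' : (k - 1) * (k + n) ≤ d) :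
    sSup {δ : ℝ≥0∞ | ∃ A : Matrix (Fin k) (Fin n) ℝ, δ = dimH (orbit11 G A)} =
      posDefOrbitDim G + d := by
  have horbit {A : Matrix (Fin k) (Fin n) ℝ} (hA : IsUnit (A * Aᴴ)) :
      dimH (orbit11 G A) = dimH (conjOrbit G (rowGram A)) + d := by
    have h := dimH_orbit11_add_finrank G hkn hA
    rw [← hd, Nat.cast_add, ← add_assoc, add_right_comm] at h
    exact (ENNReal.add_left_inj (natCast_ne_top _)).1 h
  have : Nonempty {S : SymMatrix (Fin k) // (S : Matrix (Fin k) (Fin k) ℝ).PosDef} :=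
    ⟨⟨⟨1, .one _⟩, .one⟩⟩
  rw [posDefOrbitDim, ENNReal.iSup_add]
  refine le_antisymm (sSup_le ?_) (iSup_le ?_)
  · rintro _ ⟨A, rfl⟩
    by_cases hA : IsUnit (A * Aᴴ)
    · have hpos : (rowGram A : Matrix (Fin k) (Fin k) ℝ).PosDef := by
        rw [coe_rowGram]
        exact (posSemidef_self_mul_conjTranspose A).posDef_iff_isUnit.2 hA
      exact (horbit hA).trans_le (le_iSup_of_le ⟨rowGram A, hpos⟩ le_rfl)
    · have hrank : A.rank ≤ k - 1 :=
        Nat.le_sub_one_of_lt (by simpa using rank_lt_of_not_isUnit_mul_conjTranspose hA)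
      refine ((dimH_orbit11_le G hrank).trans ?_).trans (le_iSup_of_le this.some le_add_self)
      exact_mod_cast hd'
  · rintro ⟨S, hS⟩
    obtain ⟨A, hA⟩ :=
      exists_mul_conjTranspose_eq_of_posSemidef (Fin.castLEEmb hkn.le) hS.posSemidef
    obtain rfl : rowGram A = S := Subtype.ext ((coe_rowGram A).trans hA)
    exact le_sSup ⟨A, (horbit (hA ▸ hS.isUnit)).symm⟩

theorem cohom11_eq (hn : 2 * k ^ 2 < n) :
    cohom11 k G n = finrank ℝ (SymMatrix (Fin k)) - posDefOrbitDim G := by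
  have hfin : finrank ℝ (SymMatrix (Fin k)) ≤ k * k := by
    simpa [finrank_matrix] using (SymMatrix (Fin k)).finrank_le
  have hdim : finrank ℝ (SymMatrix (Fin k)) + (k - 1) * (k + n) ≤ k * n := by
    rcases k with - | k
    · simpa using hfin
    · simp only [Nat.add_sub_cancel]
      nlinarith
  obtain ⟨d, hd, hd'⟩ : ∃ d, finrank ℝ (SymMatrix (Fin k)) + d = k * n ∧ (k - 1) * (k + n) ≤ d :=
    ⟨k * n - finrank ℝ (SymMatrix (Fin k)), by omega, by omega⟩
  rw [cohom11, sSup_dimH_orbit11 G (by nlinarith) hd hd', ← hd, Nat.cast_add]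
  exact ENNReal.add_sub_add_eq_sub_right (natCast_ne_top _)

end Orbit

end Matrix

theorem stmt11_general (k : ℕ) (G : Subgroup (Matrix.orthogonalGroup (Fin k) ℝ)) :
    ∃ N : ℕ, ∃ c₀ : ℝ≥0∞, ∀ n : ℕ, N ≤ n → cohom11 k G n = c₀ :=
  ⟨2 * k ^ 2 + 1, _, fun _ hn ↦ cohom11_eq G hn⟩

theorem stmt11 (k : ℕ) (hk : 1 ≤ k)
    (G : Subgroup (Matrix.orthogonalGroup (Fin k) ℝ))
    (hG : IsClosed {M : Matrix (Fin k) (Fin k) ℝ | ∃ g ∈ G, M = g}) :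
    ∃ N : ℕ, ∃ c₀ : ℝ≥0∞, ∀ n : ℕ, N ≤ n → cohom11 k G n = c₀ :=
  stmt11_general k G
end

section
/- Let V be a nonzero finite-dimensional real inner product space and let G be a closed connected nontrivial subgroup of the orthogonal group O(V). Consider the diagonal action of G on V × V, g·(v,w) = (g v, g w). Then c(G, V × V) ≥ 2·c(G, V) + 1, where c denotes cohomogeneity. -/
open ENNReal

/-- The cohomogeneity of the action of a set `M` of continuous linear maps on a
finite-dimensional real normed space `W`: `dim_ℝ W` minus the supremum of the Hausdorff
dimensions of the orbits `{f p : f ∈ M}`. -/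
noncomputable def cohom12 {W : Type*} [NormedAddCommGroup W] [NormedSpace ℝ W]
    (M : Set (W →L[ℝ] W)) : ℝ≥0∞ :=
  (Module.finrank ℝ W : ℝ≥0∞) -
    sSup {d : ℝ≥0∞ | ∃ p : W, d = dimH {q : W | ∃ f ∈ M, q = f p}}

/-- The diagonal action of `M` on `V × V`, as a set of continuous linear maps on `V × V`. -/
noncomputable def diag12 {V : Type*} [NormedAddCommGroup V] [NormedSpace ℝ V]
    (M : Set (V →L[ℝ] V)) : Set ((V × V) →L[ℝ] (V × V)) :=
  {F | ∃ f ∈ M, F = f.prodMap f}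

/-!
Let `𝔤` be the Lie algebra of `G`. The orbit of `v` is a submanifold with tangent space `𝔤 v` at
`v`, so `c(G, V) = dim V - r` for `r` the largest dimension of a space `𝔤 v`. On `V × V` the orbit
of `(v, w)` has dimension `dim 𝔤 v + dim 𝔤_v w`, where `𝔤_v` is the isotropy algebra of `v`. If `v`
has maximal rank, comparing the ranks of `X ↦ X (v + t w)` for small `t` gives `𝔤_v w ⊆ 𝔤 v`.

This inclusion is strict for every `w`, so orbits on `V × V` have dimension at most `2 r - 1`:
suppose `𝔤_v w = 𝔤 v` and write `w = a + c` with `a ∈ 𝔤 v` and `c ⟂ 𝔤 v`. For `X ∈ 𝔤_v`,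
skew-symmetry gives `‖X c‖² = -⟪c, X (X c)⟫ = 0`, as `X (X c) ∈ 𝔤 v`; hence `X w = X a`. Some such
`X` has `X w = a`, so `X a = a` and skew-symmetry forces `a = 0`, whence `𝔤 v = 𝔤_v w = 0`. Then
`𝔤 = 0`, and a compact group with trivial Lie algebra is finite.

Hausdorff dimensions enter through Cartan's closed subgroup theorem: near the identity every
element of `G` is `exp Y * exp Z` with `Z ∈ 𝔤_v` and `Y` in a complement of `𝔤_v` in `𝔤`.
-/

open Filter Topology NormedSpace Module

section LinearAlgebra

variable {K E F F' : Type*} [Field K] [AddCommGroup E] [Module K E] [AddCommGroup F]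
  [Module K F] [AddCommGroup F'] [Module K F']

theorem finrank_map_add_finrank_inf_ker (p : Submodule K E) [FiniteDimensional K p]
    (f : E →ₗ[K] F) : finrank K (p.map f) + finrank K ↥(p ⊓ f.ker) = finrank K p := by
  have h := (f.domRestrict p).finrank_range_add_finrank_ker
  rw [LinearMap.range_domRestrict, LinearMap.ker_domRestrict] at h
  rwa [← Submodule.map_comap_subtype, Submodule.finrank_map_subtype_eq]

theorem finrank_map_prod (p : Submodule K E) [FiniteDimensional K p] (f : E →ₗ[K] F)
    (g : E →ₗ[K] F') :
    finrank K (p.map (f.prod g)) = finrank K (p.map f) + finrank K ((p ⊓ f.ker).map g) := by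
  have hfg := finrank_map_add_finrank_inf_ker p (f.prod g)
  have hf := finrank_map_add_finrank_inf_ker p f
  have hg := finrank_map_add_finrank_inf_ker (p ⊓ f.ker) g
  rw [LinearMap.ker_prod, ← inf_assoc] at hfg
  omega

end LinearAlgebra

section RankPerturbation

variable {𝕜 E F : Type*} [NontriviallyNormedField 𝕜] [CompleteSpace 𝕜] [AddCommGroup E]
  [Module 𝕜 E] [NormedAddCommGroup F] [NormedSpace 𝕜 F] [FiniteDimensional 𝕜 F]

theorem apply_mem_range_of_finrank_range_add_smul_le {f g : E →ₗ[𝕜] F}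
    (h : ∀ t : 𝕜, finrank 𝕜 (f + t • g).range ≤ finrank 𝕜 f.range) {x : E} (hx : f x = 0) :
    g x ∈ f.range := by
  by_contra hgx
  let b := finBasis 𝕜 f.range
  choose y hy using fun j => (b j).2
  -- for `t ≠ 0` all entries of `G t` lie in the range of `f + t • g`: the first is its value at
  -- `t⁻¹ • x`
  let G (t : 𝕜) : Fin (finrank 𝕜 f.range + 1) → F :=
    Fin.cons (g x) fun j => (f + t • g) (y j)
  have hG : Continuous G := by
    refine continuous_pi (Fin.cases ?_ fun j => ?_) <;>
      simp only [G, Fin.cons_zero, Fin.cons_succ, LinearMap.add_apply, LinearMap.smul_apply] <;>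
      fun_prop
  have hG0 : LinearIndependent 𝕜 (G 0) := by
    simp only [G, zero_smul, add_zero, linearIndependent_finCons, hy]
    refine ⟨b.linearIndependent.map' f.range.subtype (Submodule.ker_subtype _), fun hmem => hgx ?_⟩
    exact Submodule.span_le.2 (Set.range_subset_iff.2 fun j => (b j).2) hmem
  obtain ⟨t, hGt, ht⟩ : ∃ t, LinearIndependent 𝕜 (G t) ∧ t ≠ 0 := by
    have hnear := hG.continuousAt.eventually (isOpen_setOfPred_linearIndependent.mem_nhds hG0)
    exact ((hnear.filter_mono nhdsWithin_le_nhds).and self_mem_nhdsWithin).exists (f := 𝓝[≠] 0)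
  have hmem : ∀ j, G t j ∈ (f + t • g).range :=
    Fin.cases ⟨t⁻¹ • x, by simp [G, hx, ht]⟩ fun j => ⟨y j, rfl⟩
  have hcard := (LinearIndependent.of_comp (Submodule.subtype _)
    (v := fun j => (⟨G t j, hmem j⟩ : (f + t • g).range)) hGt).fintype_card_le_finrank
  rw [Fintype.card_fin] at hcard
  have := h t
  omega

end RankPerturbation

section OrbitTangent

variable {V : Type*} [NormedAddCommGroup V] [NormedSpace ℝ V]

/-- The space `{X v | X ∈ 𝔤}`: if `𝔤` is the Lie algebra of a linear group, the tangent space at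
`v` of the orbit of `v`. -/
noncomputable def orbitTangent (𝔤 : Submodule ℝ (V →L[ℝ] V)) (v : V) : Submodule ℝ V :=
  𝔤.map (ContinuousLinearMap.apply ℝ V v).toLinearMap

/-- The operators in `𝔤` that kill `v`: if `𝔤` is the Lie algebra of a linear group, the Lie
algebra of the stabilizer of `v`. -/
noncomputable def isotropy (𝔤 : Submodule ℝ (V →L[ℝ] V)) (v : V) : Submodule ℝ (V →L[ℝ] V) :=
  𝔤 ⊓ (ContinuousLinearMap.apply ℝ V v).ker

variable {𝔤 : Submodule ℝ (V →L[ℝ] V)} {v w : V}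

theorem orbitTangent_eq_range : orbitTangent 𝔤 v =
    ((ContinuousLinearMap.apply ℝ V v).toLinearMap ∘ₗ 𝔤.subtype).range := by
  rw [LinearMap.range_comp, Submodule.range_subtype, orbitTangent]

theorem exists_sup_isotropy_eq (𝔤 : Submodule ℝ (V →L[ℝ] V)) [FiniteDimensional ℝ 𝔤]
    (v : V) :
    ∃ 𝔪, 𝔪 ⊔ isotropy 𝔤 v = 𝔤 ∧ finrank ℝ 𝔪 = finrank ℝ (orbitTangent 𝔤 v) := by
  obtain ⟨𝔫, h𝔫⟩ := exists_isCompl (isotropy 𝔤 v)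
  have hle : isotropy 𝔤 v ≤ 𝔤 := inf_le_left
  have hsup : 𝔫 ⊓ 𝔤 ⊔ isotropy 𝔤 v = 𝔤 := by
    rw [sup_comm, ← sup_inf_assoc_of_le 𝔫 hle, h𝔫.sup_eq_top, top_inf_eq]
  have hinf : 𝔫 ⊓ 𝔤 ⊓ isotropy 𝔤 v = ⊥ := by
    rw [inf_assoc, inf_eq_right.2 hle, h𝔫.symm.inf_eq_bot]
  have := Submodule.finiteDimensional_of_le hle
  have hdim := Submodule.finrank_sup_add_finrank_inf_eq (𝔫 ⊓ 𝔤) (isotropy 𝔤 v)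
  rw [hsup, hinf, finrank_bot, add_zero] at hdim
  have hrank := finrank_map_add_finrank_inf_ker 𝔤 (ContinuousLinearMap.apply ℝ V v).toLinearMap
  exact ⟨𝔫 ⊓ 𝔤, hsup, Nat.add_right_cancel (hdim.symm.trans hrank.symm)⟩

/-- The diagonal embedding of the operators on `V` into those on `V × V`. -/
noncomputable def diagonalAlgHom (V : Type*) [NormedAddCommGroup V] [NormedSpace ℝ V] :
    (V →L[ℝ] V) →ₐ[ℝ] (V × V →L[ℝ] V × V) where
  toFun f := f.prodMap f
  map_one' := rfl
  map_mul' _ _ := rfl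
  map_zero' := rfl
  map_add' _ _ := rfl
  commutes' _ := rfl

theorem diagonalAlgHom_injective : Function.Injective (diagonalAlgHom V) := fun f g h => by
  ext v
  exact congrArg Prod.fst (DFunLike.congr_fun h (v, v))

theorem diag12_eq_image (M : Set (V →L[ℝ] V)) : diag12 M = diagonalAlgHom V '' M :=
  Set.ext fun _ => exists_congr fun _ => and_congr_right' eq_comm

theorem finrank_orbitTangent_map_diagonalAlgHom (𝔤 : Submodule ℝ (V →L[ℝ] V))
    [FiniteDimensional ℝ 𝔤] (v w : V) :
    finrank ℝ (orbitTangent (𝔤.map (diagonalAlgHom V).toLinearMap) (v, w)) =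
      finrank ℝ (orbitTangent 𝔤 v) + finrank ℝ (orbitTangent (isotropy 𝔤 v) w) := by
  rw [orbitTangent, ← Submodule.map_comp]
  exact finrank_map_prod 𝔤 (ContinuousLinearMap.apply ℝ V v).toLinearMap
    (ContinuousLinearMap.apply ℝ V w).toLinearMap

variable [FiniteDimensional ℝ V]

theorem exists_forall_finrank_orbitTangent_le (𝔤 : Submodule ℝ (V →L[ℝ] V)) :
    ∃ v, ∀ u, finrank ℝ (orbitTangent 𝔤 u) ≤ finrank ℝ (orbitTangent 𝔤 v) := by
  have hb : BddAbove (Set.range fun v => finrank ℝ (orbitTangent 𝔤 v)) :=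
    ⟨finrank ℝ V, Set.forall_mem_range.2 fun v => Submodule.finrank_le _⟩
  obtain ⟨v, hv⟩ := Nat.sSup_mem (Set.range_nonempty _) hb
  exact ⟨v, fun u => (le_csSup hb ⟨u, rfl⟩).trans hv.ge⟩

theorem orbitTangent_isotropy_le
    (hv : ∀ u, finrank ℝ (orbitTangent 𝔤 u) ≤ finrank ℝ (orbitTangent 𝔤 v)) (w : V) :
    orbitTangent (isotropy 𝔤 v) w ≤ orbitTangent 𝔤 v := by
  rintro _ ⟨X, ⟨hX, hXv⟩, rfl⟩
  let ev (u : V) : 𝔤 →ₗ[ℝ] V := (ContinuousLinearMap.apply ℝ V u).toLinearMap ∘ₗ 𝔤.subtype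
  have hev (u : V) : orbitTangent 𝔤 u = (ev u).range := orbitTangent_eq_range
  have hadd (t : ℝ) : ev v + t • ev w = ev (v + t • w) := by ext Y; simp [ev]
  rw [hev]
  refine apply_mem_range_of_finrank_range_add_smul_le (g := ev w) (fun t => ?_) (x := ⟨X, hX⟩) hXv
  rw [hadd, ← hev, ← hev]
  exact hv _

end OrbitTangent

section Skew

open scoped InnerProductSpace

variable {V : Type*} [NormedAddCommGroup V] [InnerProductSpace ℝ V]
  {𝔤 : Submodule ℝ (V →L[ℝ] V)} {v w : V}

theorem inner_apply_left_eq_neg_inner_right {X : V →L[ℝ] V} (hX : ∀ u, ⟪X u, u⟫_ℝ = 0) (u w : V) :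
    ⟪X u, w⟫_ℝ = -⟪u, X w⟫_ℝ := by
  have h := hX (u + w)
  rw [map_add, inner_add_left, inner_add_right, inner_add_right, hX, hX,
    real_inner_comm u] at h
  linarith

variable [FiniteDimensional ℝ V]

theorem orbitTangent_isotropy_lt (hskew : ∀ X ∈ 𝔤, ∀ u, ⟪X u, u⟫_ℝ = 0)
    (hv : ∀ u, finrank ℝ (orbitTangent 𝔤 u) ≤ finrank ℝ (orbitTangent 𝔤 v))
    (hne : orbitTangent 𝔤 v ≠ ⊥) (w : V) :
    orbitTangent (isotropy 𝔤 v) w < orbitTangent 𝔤 v := by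
  refine (orbitTangent_isotropy_le hv w).lt_of_ne fun heq => hne ?_
  obtain ⟨a, ha, c, hc, rfl⟩ := (orbitTangent 𝔤 v).exists_add_mem_mem_orthogonal w
  have hkill : ∀ X ∈ isotropy 𝔤 v, X (a + c) = X a := fun X hX => by
    have hXX : X (X c) ∈ orbitTangent 𝔤 v := orbitTangent_isotropy_le hv _ ⟨X, hX, rfl⟩
    have hXc : ⟪X c, X c⟫_ℝ = 0 := by
      rw [inner_apply_left_eq_neg_inner_right (hskew X hX.1), neg_eq_zero]
      exact Submodule.inner_left_of_mem_orthogonal hXX hc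
    rw [map_add, inner_self_eq_zero.1 hXc, add_zero]
  have ha0 : a = 0 := by
    obtain ⟨X, hX, hXa⟩ := heq.ge ha
    have : X a = a := (hkill X hX).symm.trans hXa
    simpa only [this, inner_self_eq_zero] using hskew X hX.1 a
  rw [← heq, eq_bot_iff]
  rintro _ ⟨X, hX, rfl⟩
  exact (hkill X hX).trans (by rw [ha0, map_zero])

theorem orbitTangent_ne_bot
    (hv : ∀ u, finrank ℝ (orbitTangent 𝔤 u) ≤ finrank ℝ (orbitTangent 𝔤 v))
    (h : 𝔤 ≠ ⊥) : orbitTangent 𝔤 v ≠ ⊥ := by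
  obtain ⟨X, hX, hX0⟩ := 𝔤.exists_mem_ne_zero_of_ne_bot h
  obtain ⟨u, hu⟩ := DFunLike.exists_ne hX0
  intro hbot
  have hzero := hv u
  rw [hbot, finrank_bot, Nat.le_zero, Submodule.finrank_eq_zero] at hzero
  exact hu ((Submodule.mem_bot ℝ).1 (hzero ▸ ⟨X, hX, rfl⟩))

theorem finrank_orbitTangent_map_diagonalAlgHom_lt (hskew : ∀ X ∈ 𝔤, ∀ u, ⟪X u, u⟫_ℝ = 0)
    (h𝔤 : 𝔤 ≠ ⊥) (hv : ∀ u, finrank ℝ (orbitTangent 𝔤 u) ≤ finrank ℝ (orbitTangent 𝔤 v))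
    (p : V × V) :
    finrank ℝ (orbitTangent (𝔤.map (diagonalAlgHom V).toLinearMap) p) <
      2 * finrank ℝ (orbitTangent 𝔤 v) := by
  obtain ⟨a, b⟩ := p
  rw [finrank_orbitTangent_map_diagonalAlgHom, two_mul]
  obtain hlt | heq := (hv a).lt_or_eq
  · exact add_lt_add_of_lt_of_le hlt
      ((Submodule.finrank_mono (Submodule.map_mono inf_le_left)).trans (hv b))
  · have ha (u) : finrank ℝ (orbitTangent 𝔤 u) ≤ finrank ℝ (orbitTangent 𝔤 a) := heq ▸ hv u
    rw [← heq]
    exact Nat.add_lt_add_left (Submodule.finrank_lt_finrank_of_lt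
      (orbitTangent_isotropy_lt hskew ha (orbitTangent_ne_bot ha h𝔤) b)) _

end Skew

section Exp

variable {𝔸 : Type*} [NormedRing 𝔸] [NormedAlgebra ℝ 𝔸] [CompleteSpace 𝔸]

theorem contDiff_exp_coe (p : Submodule ℝ 𝔸) {n : WithTop ℕ∞} :
    ContDiff ℝ n fun X : p => exp (X : 𝔸) := by
  have hexp : ContDiff ℝ n (exp : 𝔸 → 𝔸) :=
    contDiff_iff_contDiffAt.2 fun X => (exp_analytic X).contDiffAt
  exact hexp.comp p.subtypeL.contDiff

theorem exp_mul_exp_neg (X : 𝔸) : exp X * exp (-X) = 1 := by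
  let _ : NormedAlgebra ℚ 𝔸 := .restrictScalars ℚ ℝ 𝔸
  rw [← exp_add_of_commute (Commute.refl X).neg_right, add_neg_cancel, exp_zero]

theorem hasStrictFDerivAt_exp_comp_zero {E : Type*} [NormedAddCommGroup E] [NormedSpace ℝ E]
    (L : E →L[ℝ] 𝔸) : HasStrictFDerivAt (fun x => exp (L x)) L 0 := by
  have hexp : HasStrictFDerivAt exp (1 : 𝔸 →L[ℝ] 𝔸) (L 0) := by
    rw [map_zero]; exact hasStrictFDerivAt_exp_zero
  exact hexp.comp 0 L.hasStrictFDerivAt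

theorem exists_local_log : ∃ log : 𝔸 → 𝔸, HasFDerivAt log (.id ℝ 𝔸) 1 ∧ log 1 = 0 ∧
    ∀ᶠ a in 𝓝 1, exp (log a) = a := by
  have h : HasStrictFDerivAt exp (ContinuousLinearEquiv.refl ℝ 𝔸 : 𝔸 →L[ℝ] 𝔸) 0 :=
    hasStrictFDerivAt_exp_zero
  have hderiv := h.to_localInverse.hasFDerivAt
  have hzero := h.localInverse_apply_image
  have hright := h.eventually_right_inverse
  rw [exp_zero] at hderiv hzero hright
  exact ⟨_, hderiv, hzero, hright⟩

theorem map_exp_mul_exp_mul_exp_nhds_zero {𝔪 𝔰 𝔠 : Submodule ℝ 𝔸} [CompleteSpace 𝔪]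
    [CompleteSpace 𝔰] [CompleteSpace 𝔠] (h : 𝔪 ⊔ 𝔰 ⊔ 𝔠 = ⊤) :
    map (fun x : (𝔪 × 𝔰) × 𝔠 => exp (x.1.1 : 𝔸) * exp (x.1.2 : 𝔸) * exp (x.2 : 𝔸)) (𝓝 0) = 𝓝 1 := by
  let L : (𝔪 × 𝔰) × 𝔠 →L[ℝ] 𝔸 := (𝔪.subtypeL.coprod 𝔰.subtypeL).coprod 𝔠.subtypeL
  have hderiv : HasStrictFDerivAt
      (fun x : (𝔪 × 𝔰) × 𝔠 => exp (x.1.1 : 𝔸) * exp (x.1.2 : 𝔸) * exp (x.2 : 𝔸)) L 0 := by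
    have h1 := hasStrictFDerivAt_exp_comp_zero (𝔪.subtypeL ∘L .fst ℝ 𝔪 𝔰 ∘L .fst ℝ (𝔪 × 𝔰) 𝔠)
    have h2 := hasStrictFDerivAt_exp_comp_zero (𝔰.subtypeL ∘L .snd ℝ 𝔪 𝔰 ∘L .fst ℝ (𝔪 × 𝔰) 𝔠)
    have h3 := hasStrictFDerivAt_exp_comp_zero (𝔠.subtypeL ∘L .snd ℝ (𝔪 × 𝔰) 𝔠)
    refine ((h1.mul' h2).mul' h3).congr_fderiv ?_
    ext x <;> simp [L]
  have hsurj : L.range = ⊤ := by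
    change ((𝔪.subtype.coprod 𝔰.subtype).coprod 𝔠.subtype).range = ⊤
    simp only [LinearMap.range_coprod, Submodule.range_subtype, h]
  simpa using hderiv.map_nhds_eq_of_surj hsurj

end Exp

/-- A closed subset of a topological monoid `𝔸` that is a group under the operations of `𝔸`, i.e.
a closed subgroup of the unit group whose embedding in `𝔸` is closed as well. -/
structure IsClosedUnitGroup {𝔸 : Type*} [Monoid 𝔸] [TopologicalSpace 𝔸] (M : Set 𝔸) : Prop where
  one_mem : 1 ∈ M
  mul_mem : ∀ a ∈ M, ∀ b ∈ M, a * b ∈ M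
  exists_inv : ∀ a ∈ M, ∃ b ∈ M, a * b = 1 ∧ b * a = 1
  isClosed : IsClosed M

namespace IsClosedUnitGroup

section Monoid

variable {𝔸 : Type*} [Monoid 𝔸] [TopologicalSpace 𝔸] {M : Set 𝔸} (hM : IsClosedUnitGroup M)
include hM

theorem mul_mem_cancel_left {a b : 𝔸} (ha : a ∈ M) : a * b ∈ M ↔ b ∈ M := by
  refine ⟨fun hab => ?_, hM.mul_mem a ha b⟩
  obtain ⟨c, hc, -, hca⟩ := hM.exists_inv a ha
  simpa only [← mul_assoc, hca, one_mul] using hM.mul_mem c hc _ hab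

theorem pow_mem {a : 𝔸} (ha : a ∈ M) (n : ℕ) : a ^ n ∈ M := by
  induction n with
  | zero => simpa only [pow_zero] using hM.one_mem
  | succ n ih => simpa only [pow_succ] using hM.mul_mem _ ih a ha

theorem image_mul_left_mem_nhdsWithin [ContinuousMul 𝔸] {U : Set 𝔸} (hU : U ∈ 𝓝[M] 1) {a : 𝔸}
    (ha : a ∈ M) : (a * ·) '' U ∈ 𝓝[M] a := by
  obtain ⟨b, hb, hab, hba⟩ := hM.exists_inv a ha
  have hlim : Tendsto (b * ·) (𝓝[M] a) (𝓝[M] 1) := by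
    rw [← hba]
    exact ((continuous_const_mul b).continuousWithinAt).tendsto_nhdsWithin
      fun c hc => hM.mul_mem b hb c hc
  filter_upwards [hlim hU] with c hc
  exact ⟨b * c, hc, by simp only [← mul_assoc, hab, one_mul]⟩

theorem exists_finset_subset_biUnion_image_mul_left [ContinuousMul 𝔸] (hc : IsCompact M)
    {U : Set 𝔸} (hU : U ∈ 𝓝[M] 1) : ∃ t : Finset 𝔸, M ⊆ ⋃ a ∈ t, (a * ·) '' U := by
  obtain ⟨t, -, ht⟩ := hc.elim_nhdsWithin_subcover (fun a => (a * ·) '' U) fun a ha =>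
    hM.image_mul_left_mem_nhdsWithin hU ha
  exact ⟨t, ht⟩

end Monoid

section BanachAlgebra

variable {𝔸 : Type*} [NormedRing 𝔸] [NormedAlgebra ℝ 𝔸] [CompleteSpace 𝔸] {M : Set 𝔸}
  (hM : IsClosedUnitGroup M)
include hM

theorem exp_zsmul_mem {X : 𝔸} (hX : exp X ∈ M) (n : ℤ) : exp (n • X) ∈ M := by
  let _ : NormedAlgebra ℚ 𝔸 := .restrictScalars ℚ ℝ 𝔸
  have hneg : exp (-X) ∈ M :=
    (hM.mul_mem_cancel_left hX).1 (exp_mul_exp_neg X ▸ hM.one_mem)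
  obtain ⟨n, rfl | rfl⟩ := n.eq_nat_or_neg
  · rw [natCast_zsmul, exp_nsmul]
    exact hM.pow_mem hX n
  · rw [neg_smul, ← smul_neg, natCast_zsmul, exp_nsmul]
    exact hM.pow_mem hneg n

theorem exp_smul_mem_of_tendsto {ι : Type*} {l : Filter ι} [l.NeBot] {ε : ι → ℝ} {C : ι → 𝔸}
    {X : 𝔸} (hε : Tendsto ε l (𝓝[≠] 0)) (hC : ∀ᶠ i in l, exp (C i) ∈ M)
    (hX : Tendsto (fun i => (ε i)⁻¹ • C i) l (𝓝 X)) (t : ℝ) : exp (t • X) ∈ M := by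
  have hε0 : Tendsto ε l (𝓝 0) := hε.mono_right nhdsWithin_le_nhds
  have hεne : ∀ᶠ i in l, ε i ≠ 0 := hε.eventually self_mem_nhdsWithin
  let n (i : ι) : ℤ := ⌊t / ε i⌋
  -- `n • C = (n ε) • (ε⁻¹ • C) → t • X`, and exponentials of integer multiples of `C` stay in `M`
  have hn : Tendsto (fun i => n i * ε i) l (𝓝 t) := by
    rw [tendsto_iff_norm_sub_tendsto_zero]
    refine squeeze_zero' (.of_forall fun _ => norm_nonneg _) ?_ (tendsto_norm_zero.comp hε0)
    filter_upwards [hεne] with i hi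
    have hfract : n i * ε i - t = -(Int.fract (t / ε i) * ε i) := by
      rw [Int.fract, sub_mul, div_mul_cancel₀ t hi, neg_sub]
    rw [hfract, norm_neg, norm_mul, Real.norm_of_nonneg (Int.fract_nonneg _)]
    exact mul_le_of_le_one_left (norm_nonneg _) (Int.fract_lt_one _).le
  have hlim : Tendsto (fun i => exp (n i • C i)) l (𝓝 (exp (t • X))) := by
    let _ : NormedAlgebra ℚ 𝔸 := .restrictScalars ℚ ℝ 𝔸
    refine (exp_continuous.tendsto _).comp ((hn.smul hX).congr' ?_)
    filter_upwards [hεne] with i hi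
    rw [smul_smul, mul_inv_cancel_right₀ hi, Int.cast_smul_eq_zsmul]
  exact hM.isClosed.mem_of_tendsto hlim (hC.mono fun i hi => hM.exp_zsmul_mem hi _)

theorem exp_smul_mem_of_hasDerivAt {γ : ℝ → 𝔸} {X : 𝔸} (hγ : HasDerivAt γ X 0) (hγ0 : γ 0 = 1)
    (hmem : ∀ᶠ s in 𝓝 0, γ s ∈ M) (t : ℝ) : exp (t • X) ∈ M := by
  obtain ⟨log, hlog, hlog1, hexp⟩ := exists_local_log (𝔸 := 𝔸)
  rw [← hγ0] at hlog hexp hlog1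
  have hslope := (hlog.comp_hasDerivAt 0 hγ).tendsto_slope_zero
  simp only [zero_add, Function.comp_apply, hlog1, sub_zero] at hslope
  refine hM.exp_smul_mem_of_tendsto (l := 𝓝[≠] 0) tendsto_id ?_ hslope t
  filter_upwards [(hγ.continuousAt.eventually hexp).filter_mono nhdsWithin_le_nhds,
    hmem.filter_mono nhdsWithin_le_nhds] with s hs hsM
  rwa [hs]

omit hM in
/-- The Lie algebra of `M`, as the space of generators of one-parameter subgroups of `M`. Only the
vector space structure is recorded. -/
def lieAlgebra (hM : IsClosedUnitGroup M) : Submodule ℝ 𝔸 where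
  carrier := {X | ∀ t : ℝ, exp (t • X) ∈ M}
  zero_mem' t := by simpa only [smul_zero, exp_zero] using hM.one_mem
  smul_mem' c X hX t := by simpa only [smul_smul] using hX (t * c)
  add_mem' {X Y} hX hY := by
    refine hM.exp_smul_mem_of_hasDerivAt (γ := fun s => exp (s • X) * exp (s • Y)) ?_
      (by simp only [zero_smul, exp_zero, mul_one])
      (.of_forall fun s => hM.mul_mem _ (hX s) _ (hY s))
    simpa only [zero_smul, exp_zero, one_mul, mul_one] using
      (hasDerivAt_exp_smul_const X (0 : ℝ)).fun_mul (hasDerivAt_exp_smul_const Y (0 : ℝ))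

theorem exp_mem {X : 𝔸} (hX : X ∈ hM.lieAlgebra) : exp X ∈ M := by
  simpa only [one_smul] using hX 1

end BanachAlgebra

section FiniteDimensional

variable {𝔸 : Type*} [NormedRing 𝔸] [NormedAlgebra ℝ 𝔸] [FiniteDimensional ℝ 𝔸]
  {M : Set 𝔸}

theorem eventually_eq_zero_of_exp_mem (hM : IsClosedUnitGroup M) {𝔠 : Submodule ℝ 𝔸}
    (h𝔠 : Disjoint hM.lieAlgebra 𝔠) : ∀ᶠ C : 𝔠 in 𝓝 0, exp (C : 𝔸) ∈ M → C = 0 := by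
  by_contra hfreq
  simp only [not_eventually, Classical.not_imp] at hfreq
  obtain ⟨C, hC, hCM⟩ := exists_seq_forall_of_frequently hfreq
  -- the normalised `C i` accumulate at a unit vector of `𝔠` that lies in the Lie algebra
  have hsphere (i : ℕ) : ‖C i‖⁻¹ • C i ∈ Metric.sphere (0 : 𝔠) 1 := by
    rw [mem_sphere_zero_iff_norm, norm_smul, norm_inv, norm_norm,
      inv_mul_cancel₀ (norm_ne_zero_iff.2 (hCM i).2)]
  obtain ⟨X, hX, φ, hφ, hlim⟩ := (isCompact_sphere (0 : 𝔠) 1).tendsto_subseq hsphere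
  have hnorm : Tendsto (fun i => ‖C (φ i)‖) atTop (𝓝[≠] 0) :=
    tendsto_nhdsWithin_iff.2 ⟨tendsto_norm_zero.comp (hC.comp hφ.tendsto_atTop),
      .of_forall fun i => norm_ne_zero_iff.2 (hCM _).2⟩
  have hXlie : (X : 𝔸) ∈ hM.lieAlgebra := hM.exp_smul_mem_of_tendsto hnorm
    (.of_forall fun i => (hCM (φ i)).1) ((continuous_subtype_val.tendsto X).comp hlim)
  have hX0 : X = 0 := Subtype.ext ((Submodule.disjoint_def.1 h𝔠) X hXlie X.2)
  simp [hX0] at hX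

theorem eventually_exists_eq_exp_mul_exp (hM : IsClosedUnitGroup M) {𝔪 𝔰 : Submodule ℝ 𝔸}
    (h : 𝔪 ⊔ 𝔰 = hM.lieAlgebra) :
    ∀ᶠ A in 𝓝[M] 1, ∃ Y ∈ 𝔪, ∃ Z ∈ 𝔰, A = exp Y * exp Z := by
  obtain ⟨𝔠, h𝔠⟩ := exists_isCompl hM.lieAlgebra
  have hmap := map_exp_mul_exp_mul_exp_nhds_zero (h ▸ h𝔠.sup_eq_top : 𝔪 ⊔ 𝔰 ⊔ 𝔠 = ⊤)
  have hsmall : ∀ᶠ x : (𝔪 × 𝔰) × 𝔠 in 𝓝 0, exp (x.2 : 𝔸) ∈ M → x.2 = 0 :=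
    (continuous_snd.tendsto (0 : (𝔪 × 𝔰) × 𝔠)).eventually
      (hM.eventually_eq_zero_of_exp_mem h𝔠.disjoint)
  have himage := image_mem_map (m := fun x : (𝔪 × 𝔰) × 𝔠 =>
    exp (x.1.1 : 𝔸) * exp (x.1.2 : 𝔸) * exp (x.2 : 𝔸)) hsmall
  rw [hmap] at himage
  filter_upwards [mem_nhdsWithin_of_mem_nhds himage, self_mem_nhdsWithin]
  rintro _ ⟨⟨⟨Y, Z⟩, C⟩, hC, rfl⟩ hmem
  have hY : exp (Y : 𝔸) ∈ M := hM.exp_mem (h ▸ Submodule.mem_sup_left Y.2)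
  have hZ : exp (Z : 𝔸) ∈ M := hM.exp_mem (h ▸ Submodule.mem_sup_right Z.2)
  have hC0 : C = 0 := hC ((hM.mul_mem_cancel_left (hM.mul_mem _ hY _ hZ)).1 hmem)
  exact ⟨Y, Y.2, Z, Z.2, by simp only [hC0, ZeroMemClass.coe_zero, exp_zero, mul_one]⟩

theorem finite_of_lieAlgebra_eq_bot (hM : IsClosedUnitGroup M) (hc : IsCompact M)
    (h : hM.lieAlgebra = ⊥) : M.Finite := by
  have hone : {1} ∈ 𝓝[M] (1 : 𝔸) := by
    filter_upwards [hM.eventually_exists_eq_exp_mul_exp (𝔪 := ⊥) (𝔰 := ⊥) (by rw [sup_bot_eq, h])]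
    rintro _ ⟨_, rfl, _, rfl, rfl⟩
    simp only [exp_zero, mul_one, Set.mem_singleton_iff]
  obtain ⟨t, ht⟩ := hM.exists_finset_subset_biUnion_image_mul_left hc hone
  exact (t.finite_toSet.biUnion fun a _ => (Set.finite_singleton 1).image (a * ·)).subset ht

end FiniteDimensional

section Image

variable {𝔸 𝔹 : Type*} [NormedRing 𝔸] [NormedAlgebra ℝ 𝔸] [FiniteDimensional ℝ 𝔸]
  [NormedRing 𝔹] [NormedAlgebra ℝ 𝔹] {M : Set 𝔸} {φ : 𝔸 →ₐ[ℝ] 𝔹}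

theorem image (hM : IsClosedUnitGroup M) (hφ : Function.Injective φ) :
    IsClosedUnitGroup (φ '' M) where
  one_mem := ⟨1, hM.one_mem, map_one φ⟩
  mul_mem := by
    rintro _ ⟨a, ha, rfl⟩ _ ⟨b, hb, rfl⟩
    exact ⟨a * b, hM.mul_mem a ha b hb, map_mul φ a b⟩
  exists_inv := by
    rintro _ ⟨a, ha, rfl⟩
    obtain ⟨b, hb, hab, hba⟩ := hM.exists_inv a ha
    exact ⟨φ b, ⟨b, hb, rfl⟩, by rw [← map_mul, hab, map_one], by rw [← map_mul, hba, map_one]⟩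
  isClosed := (φ.toLinearMap.isClosedEmbedding_of_injective
    (LinearMap.ker_eq_bot.2 hφ)).isClosedMap M hM.isClosed

theorem lieAlgebra_image [CompleteSpace 𝔹] (hM : IsClosedUnitGroup M)
    (hφ : Function.Injective φ) :
    (hM.image hφ).lieAlgebra = hM.lieAlgebra.map φ.toLinearMap := by
  have hexp (X : 𝔸) (t : ℝ) : φ (exp (t • X)) = exp (t • φ X) := by
    let _ : NormedAlgebra ℚ 𝔸 := .restrictScalars ℚ ℝ 𝔸
    let _ : NormedAlgebra ℚ 𝔹 := .restrictScalars ℚ ℝ 𝔹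
    rw [map_exp φ φ.toLinearMap.continuous_of_finiteDimensional, map_smul]
  have hclosed : IsClosed (φ.toLinearMap.range : Set 𝔹) :=
    φ.toLinearMap.range.closed_of_finiteDimensional
  refine le_antisymm (fun Z hZ => ?_) ?_
  · obtain ⟨X, rfl⟩ : Z ∈ φ.toLinearMap.range := by
      have hslope := (hasDerivAt_exp_smul_const Z (0 : ℝ)).tendsto_slope_zero
      simp only [zero_add, zero_smul, exp_zero, one_mul] at hslope
      refine hclosed.mem_of_tendsto hslope (.of_forall fun t => ?_)
      obtain ⟨A, -, hA⟩ := hZ t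
      exact Submodule.smul_mem _ _ (Submodule.sub_mem _ ⟨A, hA⟩ ⟨1, map_one φ⟩)
    refine ⟨X, fun t => ?_, rfl⟩
    rw [← hφ.mem_set_image, hexp]
    exact hZ t
  · rintro _ ⟨X, hX, rfl⟩ t
    exact ⟨exp (t • X), hX t, hexp X t⟩

end Image

end IsClosedUnitGroup

section Dimension

theorem finrank_range_le_dimH_range {E F : Type*} [NormedAddCommGroup E] [NormedSpace ℝ E]
    [CompleteSpace E] [NormedAddCommGroup F] [NormedSpace ℝ F] {f : E → F} {f' : E →L[ℝ] F}
    [FiniteDimensional ℝ f'.range] {x : E} (hf : HasStrictFDerivAt f f' x) :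
    (finrank ℝ f'.range : ℝ≥0∞) ≤ dimH (Set.range f) := by
  obtain ⟨P, hP⟩ := Submodule.ClosedComplemented.of_finiteDimensional f'.range
  have hsurj : (P ∘L f').range = ⊤ := by
    refine LinearMap.range_eq_top.2 fun y => ?_
    obtain ⟨z, hz⟩ := y.2
    exact ⟨z, (congrArg P hz).trans (hP y)⟩
  have hnhds : Set.range (P ∘ f) ∈ 𝓝 (P (f x)) :=
    (P.hasStrictFDerivAt.comp x hf).map_nhds_eq_of_surj hsurj ▸ range_mem_map
  rw [← Real.dimH_of_mem_nhds hnhds, Set.range_comp]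
  exact P.lipschitz.dimH_image_le _

variable {V : Type*} [NormedAddCommGroup V] [NormedSpace ℝ V]

theorem exp_apply_eq_self [CompleteSpace V] {X : V →L[ℝ] V} {v : V} (h : X v = 0) :
    exp X v = v := by
  have hderiv (t : ℝ) : HasDerivAt (fun s : ℝ => exp (s • X) v) 0 t := by
    have := (hasDerivAt_exp_smul_const X t).clm_apply (hasDerivAt_const t v)
    simpa only [mul_apply_eq_comp, h, map_zero, add_zero] using this
  have hconst := is_const_of_deriv_eq_zero (fun t => (hderiv t).differentiableAt)
    (fun t => (hderiv t).deriv) 1 0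
  simpa only [one_smul, zero_smul, exp_zero, one_apply_eq_self] using hconst

variable [FiniteDimensional ℝ V]

namespace IsClosedUnitGroup

variable {M : Set (V →L[ℝ] V)}

theorem finrank_orbitTangent_le_dimH (hM : IsClosedUnitGroup M) (v : V) :
    (finrank ℝ (orbitTangent hM.lieAlgebra v) : ℝ≥0∞) ≤ dimH ((· v) '' M) := by
  let ev := ContinuousLinearMap.apply ℝ V v
  have hderiv : HasStrictFDerivAt (fun X : hM.lieAlgebra => exp (X : V →L[ℝ] V) v)
      (ev ∘L hM.lieAlgebra.subtypeL) 0 :=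
    ev.hasStrictFDerivAt.comp 0 (hasStrictFDerivAt_exp_comp_zero hM.lieAlgebra.subtypeL)
  rw [orbitTangent_eq_range]
  refine (finrank_range_le_dimH_range hderiv).trans (dimH_mono ?_)
  exact Set.range_subset_iff.2 fun X => ⟨exp (X : V →L[ℝ] V), hM.exp_mem X.2, rfl⟩

theorem dimH_le_finrank_orbitTangent (hM : IsClosedUnitGroup M) (hc : IsCompact M) (v : V) :
    dimH ((· v) '' M) ≤ finrank ℝ (orbitTangent hM.lieAlgebra v) := by
  obtain ⟨𝔪, h𝔪, hdim⟩ := exists_sup_isotropy_eq hM.lieAlgebra v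
  let f (Y : 𝔪) : V := exp (Y : V →L[ℝ] V) v
  have hf : dimH (Set.range f) ≤ finrank ℝ 𝔪 :=
    ((contDiff_exp_coe 𝔪).clm_apply contDiff_const).dimH_range_le
  have hlocal : {A : V →L[ℝ] V | A v ∈ Set.range f} ∈ 𝓝[M] 1 := by
    filter_upwards [hM.eventually_exists_eq_exp_mul_exp h𝔪]
    rintro _ ⟨Y, hY, Z, hZ, rfl⟩
    exact ⟨⟨Y, hY⟩, by rw [mul_apply_eq_comp, exp_apply_eq_self (show Z v = 0 from hZ.2)]⟩
  obtain ⟨t, ht⟩ := hM.exists_finset_subset_biUnion_image_mul_left hc hlocal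
  have hcover : (· v) '' M ⊆ ⋃ A ∈ t, A '' Set.range f := by
    rintro _ ⟨B, hB, rfl⟩
    obtain ⟨A, hA, C, hC, rfl⟩ := Set.mem_iUnion₂.1 (ht hB)
    exact Set.mem_iUnion₂.2 ⟨A, hA, C v, hC, rfl⟩
  calc dimH ((· v) '' M) ≤ dimH (⋃ A ∈ t, A '' Set.range f) := dimH_mono hcover
    _ = ⨆ A ∈ t, dimH (A '' Set.range f) := dimH_bUnion t.countable_toSet _
    _ ≤ finrank ℝ 𝔪 := iSup₂_le fun A _ => (A.lipschitz.dimH_image_le _).trans hf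
    _ = finrank ℝ (orbitTangent hM.lieAlgebra v) := by rw [hdim]

theorem cohom12_eq (hM : IsClosedUnitGroup M) (hc : IsCompact M) {v : V}
    (hv : ∀ u, finrank ℝ (orbitTangent hM.lieAlgebra u) ≤
      finrank ℝ (orbitTangent hM.lieAlgebra v)) :
    cohom12 M = (finrank ℝ V - finrank ℝ (orbitTangent hM.lieAlgebra v) : ℕ) := by
  have hdim (u : V) : dimH {q : V | ∃ f ∈ M, q = f u} =
      finrank ℝ (orbitTangent hM.lieAlgebra u) := by
    simp only [eq_comm (b := (_ : V →L[ℝ] V) u)]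
    exact (hM.dimH_le_finrank_orbitTangent hc u).antisymm (hM.finrank_orbitTangent_le_dimH u)
  have hmax : IsGreatest {d : ℝ≥0∞ | ∃ u : V, d = dimH {q : V | ∃ f ∈ M, q = f u}}
      (finrank ℝ (orbitTangent hM.lieAlgebra v)) := by
    refine ⟨⟨v, (hdim v).symm⟩, ?_⟩
    rintro _ ⟨u, rfl⟩
    rw [hdim]
    exact_mod_cast hv u
  rw [cohom12, hmax.csSup_eq, ENNReal.natCast_sub]

end IsClosedUnitGroup

end Dimension

theorem isCompact_of_forall_norm_apply_eq {V : Type*} [NormedAddCommGroup V] [NormedSpace ℝ V]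
    [FiniteDimensional ℝ V] {M : Set (V →L[ℝ] V)} (hclosed : IsClosed M)
    (hiso : ∀ f ∈ M, ∀ v, ‖f v‖ = ‖v‖) : IsCompact M := by
  refine Metric.isCompact_of_isClosed_isBounded hclosed
    (isBounded_iff_forall_norm_le.2 ⟨1, fun f hf => ?_⟩)
  exact f.opNorm_le_bound zero_le_one fun v => by rw [hiso f hf, one_mul]

open scoped InnerProductSpace in
theorem IsClosedUnitGroup.inner_apply_self_eq_zero {V : Type*} [NormedAddCommGroup V]
    [InnerProductSpace ℝ V] [CompleteSpace V] {M : Set (V →L[ℝ] V)} (hM : IsClosedUnitGroup M)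
    (hiso : ∀ f ∈ M, ∀ v, ‖f v‖ = ‖v‖) {X : V →L[ℝ] V} (hX : X ∈ hM.lieAlgebra) (v : V) :
    ⟪X v, v⟫_ℝ = 0 := by
  have hcurve : HasDerivAt (fun t : ℝ => exp (t • X) v) (X v) 0 := by
    have := (hasDerivAt_exp_smul_const X (0 : ℝ)).clm_apply (hasDerivAt_const 0 v)
    simpa only [zero_smul, exp_zero, one_mul, map_zero, add_zero] using this
  have hnorm := hcurve.norm_sq
  simp only [hiso _ (hX _), zero_smul, exp_zero, one_apply_eq_self] at hnorm
  have hzero := hnorm.unique (hasDerivAt_const _ _)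
  rw [real_inner_comm]
  linarith

theorem stmt12_general {V : Type*} [NormedAddCommGroup V] [InnerProductSpace ℝ V]
    [FiniteDimensional ℝ V] {M : Set (V →L[ℝ] V)} (hM : IsClosedUnitGroup M)
    (hiso : ∀ f ∈ M, ∀ v, ‖f v‖ = ‖v‖) (hinf : M.Infinite) :
    2 * cohom12 M + 1 ≤ cohom12 (diag12 M) := by
  have hc := isCompact_of_forall_norm_apply_eq hM.isClosed hiso
  have hc' : IsCompact (diagonalAlgHom V '' M) :=
    hc.image (diagonalAlgHom V).toLinearMap.continuous_of_finiteDimensional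
  have hM' := hM.image (𝔹 := V × V →L[ℝ] V × V) diagonalAlgHom_injective
  have hlie : hM.lieAlgebra ≠ ⊥ := fun h => hinf (hM.finite_of_lieAlgebra_eq_bot hc h)
  obtain ⟨v, hv⟩ := exists_forall_finrank_orbitTangent_le hM.lieAlgebra
  obtain ⟨p, hp⟩ := exists_forall_finrank_orbitTangent_le hM'.lieAlgebra
  rw [diag12_eq_image, hM.cohom12_eq hc hv, hM'.cohom12_eq hc' hp, finrank_prod,
    hM.lieAlgebra_image diagonalAlgHom_injective]
  have hlt := finrank_orbitTangent_map_diagonalAlgHom_lt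
    (fun X hX => hM.inner_apply_self_eq_zero hiso hX) hlie hv p
  have hle := (orbitTangent hM.lieAlgebra v).finrank_le
  norm_cast
  omega

theorem stmt12 (V : Type*) [NormedAddCommGroup V] [InnerProductSpace ℝ V]
    [FiniteDimensional ℝ V] (hV : 0 < Module.finrank ℝ V)
    (M : Set (V →L[ℝ] V))
    -- `M` consists of orthogonal transformations:
    (hiso : ∀ f ∈ M, ∀ v : V, ‖f v‖ = ‖v‖)
    -- `M` is a subgroup of `O(V)`:
    (hone : ContinuousLinearMap.id ℝ V ∈ M)
    (hmul : ∀ f ∈ M, ∀ g ∈ M, f.comp g ∈ M)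
    (hinv : ∀ f ∈ M, ∃ g ∈ M, f.comp g = ContinuousLinearMap.id ℝ V ∧
      g.comp f = ContinuousLinearMap.id ℝ V)
    -- `M` is closed, connected and nontrivial:
    (hclosed : IsClosed M)
    (hconn : IsConnected M)
    (hnontriv : M ≠ {ContinuousLinearMap.id ℝ V}) :
    2 * cohom12 M + 1 ≤ cohom12 (diag12 M) := by
  have hinf := hconn.isPreconnected.infinite_of_nontrivial
    ((Set.nontrivial_iff_ne_singleton hone).2 hnontriv)
  exact stmt12_general ⟨hone, hmul, hinv, hclosed⟩ hiso hinf
end
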